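/- arXiv:1602.06017 — 7 statements merged into one kernel-verified Lean document; each statement's English description precedes it below -/
import Mathlib

section
/- Let $G_1, \dots, G_k$ be finite groups whose orders are pairwise coprime, and let $G = \prod_{i=1}^k G_i$. Then $S(G) = \prod_{i=1}^k S(G_i)$. -/
/-- For a finite group `G`, `phiG G` is the number of elements of `G` whose order
equals the exponent of `G` (a group-theoretic generalization of Euler's totient). -/
noncomputable def phiG (G : Type*) [Group G] : ℕ :=
  Nat.card {a : G // orderOf a = Monoid.exponent G}

/-- `SG G` is the sum of `phiG H` over all subgroups `H` of `G`. -/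
noncomputable def SG (G : Type*) [Group G] : ℕ :=
  ∑ᶠ H : Subgroup G, phiG H

/-!
When the exponents of the factors are pairwise coprime, each coordinate of an element of the
product, placed alone in its factor, is a power of that element. Hence every subgroup of the
product is the product of its projections. Moreover the order of an element, and likewise the
exponent, is an lcm of pairwise coprime contributions of the factors, so an element attains the
exponent exactly when all its coordinates do. Therefore `phiG` is multiplicative, and the sum
over the subgroups of the product expands into the product of the sums.
-/

section Coprime

variable {ι : Type*}

theorem lcm_eq_lcm_iff_of_dvd_of_pairwise_coprime [Fintype ι] {m n : ι → ℕ}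
    (hdvd : ∀ i, m i ∣ n i) (hn : Pairwise (Function.onFun Nat.Coprime n)) :
    Finset.univ.lcm m = Finset.univ.lcm n ↔ ∀ i, m i = n i := by
  classical
  refine ⟨fun h i => (hdvd i).antisymm ?_, fun h => congrArg _ (funext h)⟩
  have hm : Pairwise (Function.onFun Nat.Coprime m) :=
    fun i j hij => (hn hij).of_dvd (hdvd i) (hdvd j)
  have h_lcm : Finset.univ.lcm m = m i * ∏ j ∈ Finset.univ.erase i, m j := by
    rw [Finset.lcm_eq_prod (hm.set_pairwise _), Finset.mul_prod_erase _ _ (Finset.mem_univ i)]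
  have h_coprime : (n i).Coprime (∏ j ∈ Finset.univ.erase i, m j) :=
    Nat.Coprime.prod_right fun j hj =>
      (hn (Finset.ne_of_mem_erase hj).symm).coprime_dvd_right (hdvd j)
  apply h_coprime.dvd_of_dvd_mul_right
  rw [← h_lcm, h]
  exact Finset.dvd_lcm (Finset.mem_univ i)

theorem orderOf_pi_eq_exponent_iff [Finite ι] {M : ι → Type*} [∀ i, Monoid (M i)]
    (hM : Pairwise (Function.onFun Nat.Coprime fun i => Monoid.exponent (M i))) (a : ∀ i, M i) :
    orderOf a = Monoid.exponent (∀ i, M i) ↔ ∀ i, orderOf (a i) = Monoid.exponent (M i) := by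
  cases nonempty_fintype ι
  rw [Pi.orderOf, Monoid.exponent_pi]
  exact lcm_eq_lcm_iff_of_dvd_of_pairwise_coprime (fun i => Monoid.order_dvd_exponent (a i)) hM

theorem exists_pow_eq_mulSingle [Finite ι] [DecidableEq ι] {M : ι → Type*} [∀ i, Monoid (M i)]
    (x : ∀ i, M i) (hx : Pairwise (Function.onFun Nat.Coprime fun i => orderOf (x i))) (i : ι) :
    ∃ k : ℕ, x ^ k = Pi.mulSingle i (x i) := by
  cases nonempty_fintype ι
  let n := ∏ j ∈ Finset.univ.erase i, orderOf (x j)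
  have hn : n.Coprime (orderOf (x i)) :=
    Nat.Coprime.prod_left fun j hj => hx (Finset.ne_of_mem_erase hj)
  obtain ⟨k, hk⟩ := exists_pow_eq_self_of_coprime hn
  refine ⟨n * k, funext fun j => ?_⟩
  rw [Pi.pow_apply, pow_mul]
  obtain rfl | hji := eq_or_ne j i
  · rw [hk, Pi.mulSingle_eq_same]
  · have hjn : orderOf (x j) ∣ n :=
      Finset.dvd_prod_of_mem _ (Finset.mem_erase.mpr ⟨hji, Finset.mem_univ j⟩)
    rw [orderOf_dvd_iff_pow_eq_one.mp hjn, one_pow, Pi.mulSingle_eq_of_ne hji]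

end Coprime

section Subgroup

variable {ι : Type*} {G : ι → Type*} [∀ i, Group (G i)]

theorem subgroup_pi_univ_injective :
    Function.Injective fun H : ∀ i, Subgroup (G i) => Subgroup.pi Set.univ H := by
  classical
  intro H K h
  ext i g
  simpa [Subgroup.mulSingle_mem_pi] using SetLike.ext_iff.mp h (Pi.mulSingle i g)

theorem subgroup_pi_map_eval_eq_self [Finite ι]
    (hG : Pairwise (Function.onFun Nat.Coprime fun i => Monoid.exponent (G i)))
    (K : Subgroup (∀ i, G i)) :
    Subgroup.pi Set.univ (fun i => K.map (Pi.evalMonoidHom G i)) = K := by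
  classical
  refine le_antisymm (fun y hy => Subgroup.pi_mem_of_mulSingle_mem y fun i => ?_)
    (Subgroup.le_pi_iff.mpr fun i _ => Subgroup.le_comap_map _ K)
  obtain ⟨x, hxK, hxy : x i = y i⟩ := hy i (Set.mem_univ i)
  have hx : Pairwise (Function.onFun Nat.Coprime fun j => orderOf (x j)) := fun j l hjl =>
    (hG hjl).of_dvd (Monoid.order_dvd_exponent (x j)) (Monoid.order_dvd_exponent (x l))
  obtain ⟨k, hk⟩ := exists_pow_eq_mulSingle x hx i
  rw [← hxy, ← hk]
  exact pow_mem hxK k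

theorem subgroup_pi_univ_bijective [Finite ι]
    (hG : Pairwise (Function.onFun Nat.Coprime fun i => Monoid.exponent (G i))) :
    Function.Bijective fun H : ∀ i, Subgroup (G i) => Subgroup.pi Set.univ H :=
  ⟨subgroup_pi_univ_injective, fun K => ⟨_, subgroup_pi_map_eval_eq_self hG K⟩⟩

/-- The product of the subgroups `H i`, taken inside `∀ i, G i`, is isomorphic to their product
as abstract groups. -/
def subgroupPiUnivMulEquiv (H : ∀ i, Subgroup (G i)) :
    Subgroup.pi Set.univ H ≃* ∀ i, H i where
  __ := Equiv.Set.univPi fun i => (H i : Set (G i))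
  map_mul' _ _ := rfl

end Subgroup

theorem phiG_congr {G H : Type*} [Group G] [Group H] (e : G ≃* H) : phiG G = phiG H :=
  Nat.card_congr <| e.toEquiv.subtypeEquiv fun a => by
    rw [MulEquiv.toEquiv_eq_coe, MulEquiv.coe_toEquiv, e.orderOf_eq,
      Monoid.exponent_eq_of_mulEquiv e]

section Pi

variable {ι : Type*} [Fintype ι] {G : ι → Type*} [∀ i, Group (G i)]

theorem phiG_pi (hG : Pairwise (Function.onFun Nat.Coprime fun i => Monoid.exponent (G i))) :
    phiG (∀ i, G i) = ∏ i, phiG (G i) := by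
  simp only [phiG]
  rw [← Nat.card_pi]
  exact Nat.card_congr <| (Equiv.subtypeEquivRight (orderOf_pi_eq_exponent_iff hG)).trans
    (Equiv.subtypePiEquivPi (p := fun i a => orderOf a = Monoid.exponent (G i)))

theorem phiG_subgroup_pi_univ
    (hG : Pairwise (Function.onFun Nat.Coprime fun i => Monoid.exponent (G i)))
    (H : ∀ i, Subgroup (G i)) :
    phiG (Subgroup.pi Set.univ H) = ∏ i, phiG (H i) := by
  have exponent_dvd (i : ι) : Monoid.exponent (H i) ∣ Monoid.exponent (G i) :=
    Monoid.exponent_dvd_of_monoidHom (H i).subtype (H i).subtype_injective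
  rw [phiG_congr (subgroupPiUnivMulEquiv H),
    phiG_pi fun i j hij => (hG hij).of_dvd (exponent_dvd i) (exponent_dvd j)]

theorem stmt_0_general [∀ i, Finite (G i)]
    (hG : Pairwise (Function.onFun Nat.Coprime fun i => Monoid.exponent (G i))) :
    SG (∀ i, G i) = ∏ i, SG (G i) := by
  classical
  have (i : ι) : Fintype (Subgroup (G i)) := Fintype.ofFinite _
  calc SG (∀ i, G i)
      = ∑ᶠ H : ∀ i, Subgroup (G i), phiG (Subgroup.pi Set.univ H) :=
        (finsum_eq_of_bijective _ (subgroup_pi_univ_bijective hG) fun _ => rfl).symm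
    _ = ∑ H : ∀ i, Subgroup (G i), ∏ i, phiG (H i) := by
        simp only [finsum_eq_sum_of_fintype, phiG_subgroup_pi_univ hG]
    _ = ∏ i, ∑ H : Subgroup (G i), phiG H :=
        (Fintype.prod_sum fun i (H : Subgroup (G i)) => phiG H).symm
    _ = ∏ i, SG (G i) := by simp only [SG, finsum_eq_sum_of_fintype]

end Pi

theorem stmt_0 {k : ℕ} (G : Fin k → Type*) [∀ i, Group (G i)] [∀ i, Fintype (G i)]
    (hcop : ∀ i j, i ≠ j → Nat.Coprime (Nat.card (G i)) (Nat.card (G j))) :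
    SG (∀ i, G i) = ∏ i, SG (G i) :=
  stmt_0_general fun i j hij =>
    (hcop i j hij).of_dvd Group.exponent_dvd_nat_card Group.exponent_dvd_nat_card
end

section
/- Let $G$ be a finite abelian group. Then $S(G) = |G|$ if and only if $G$ is cyclic. -/
/-!
`S(G)` counts the pairs `(H, a)` with `a ∈ H` of order `exp(H)`. Every `a` occurs in such a pair,
namely `(⟨a⟩, a)`, so `S(G) = |G|` exactly when there are no others. If some `a` has order `exp(G)`,
as happens in every finite abelian group, then `(G, a)` is a pair too and `G = ⟨a⟩`. Conversely,
in a cyclic group each `H` is cyclic of order `exp(H)`, hence generated by any such `a`.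
-/

open Subgroup Monoid

/-- A pair of a subgroup and one of its elements whose order is the exponent of the subgroup: the
objects counted by `SG G`. The element is recorded in the ambient group, so that equality of pairs
is equality of both components. -/
@[ext]
structure MaxOrderPair (G : Type*) [Group G] where
  subgroup : Subgroup G
  elem : G
  mem : elem ∈ subgroup
  orderOf_eq : orderOf elem = exponent subgroup

section

variable {G : Type*} [Group G]

namespace MaxOrderPair

/-- The fibration of the pairs over their subgroups, whose fibre over `H` is counted by
`phiG H`. -/
def equivSigma :
    MaxOrderPair G ≃ Σ H : Subgroup G, {a : H // orderOf a = exponent H} where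
  toFun x := ⟨x.subgroup, ⟨x.elem, x.mem⟩, (orderOf_mk _ _).trans x.orderOf_eq⟩
  invFun y := ⟨y.1, y.2.1, y.2.1.2, (orderOf_coe _).trans y.2.2⟩

instance [Finite G] : Finite (MaxOrderPair G) :=
  .of_equiv _ equivSigma.symm

theorem card_eq_SG [Finite G] : Nat.card (MaxOrderPair G) = SG G := by
  have := Fintype.ofFinite (Subgroup G)
  rw [Nat.card_congr equivSigma, Nat.card_sigma, SG, finsum_eq_sum_of_fintype]
  simp only [phiG]

/-- The pair of an element and the cyclic subgroup it generates: a section of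
`MaxOrderPair.elem`. -/
def ofElem (a : G) : MaxOrderPair G where
  subgroup := zpowers a
  elem := a
  mem := mem_zpowers a
  orderOf_eq := by rw [IsCyclic.exponent_eq_card, Nat.card_zpowers]

theorem elem_surjective : Function.Surjective (elem : MaxOrderPair G → G) :=
  fun a ↦ ⟨ofElem a, rfl⟩

theorem elem_injective_iff :
    Function.Injective (elem : MaxOrderPair G → G) ↔
      ∀ x : MaxOrderPair G, x.subgroup = zpowers x.elem := by
  constructor
  · intro elem_inj x
    have eq_ofElem : x = ofElem x.elem := elem_inj rfl
    exact congrArg subgroup eq_ofElem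
  · intro eq_zpowers x y elem_eq
    refine MaxOrderPair.ext ?_ elem_eq
    rw [eq_zpowers x, eq_zpowers y, elem_eq]

end MaxOrderPair

theorem SG_eq_card_iff_forall_eq_zpowers [Finite G] :
    SG G = Nat.card G ↔
      ∀ (H : Subgroup G), ∀ a ∈ H, orderOf a = exponent H → H = zpowers a :=
  calc
    SG G = Nat.card G ↔ Function.Bijective (MaxOrderPair.elem : MaxOrderPair G → G) := by
      rw [Nat.bijective_iff_surjective_and_card, and_iff_right MaxOrderPair.elem_surjective,
        MaxOrderPair.card_eq_SG]
    _ ↔ ∀ x : MaxOrderPair G, x.subgroup = zpowers x.elem := by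
      rw [Function.Bijective, and_iff_left MaxOrderPair.elem_surjective,
        MaxOrderPair.elem_injective_iff]
    _ ↔ ∀ (H : Subgroup G), ∀ a ∈ H, orderOf a = exponent H → H = zpowers a :=
      ⟨fun h H a ha ha_order ↦ h ⟨H, a, ha, ha_order⟩,
        fun h x ↦ h x.subgroup x.elem x.mem x.orderOf_eq⟩

theorem eq_zpowers_of_orderOf_eq_exponent {H : Subgroup G} [Finite H] [IsCyclic H] {a : G}
    (ha : a ∈ H) (ha_order : orderOf a = exponent H) : H = zpowers a := by
  have card_eq : Nat.card (zpowers a) = Nat.card H := by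
    rw [Nat.card_zpowers, ha_order, IsCyclic.exponent_eq_card]
  exact (eq_of_le_of_card_ge (zpowers_le.mpr ha) card_eq.ge).symm

end

theorem stmt_3_general (G : Type*) [Group G] [Finite G]
    (exists_orderOf_eq : ∃ a : G, orderOf a = exponent G) :
    SG G = Nat.card G ↔ IsCyclic G := by
  rw [SG_eq_card_iff_forall_eq_zpowers]
  constructor
  · intro eq_zpowers
    obtain ⟨a, ha⟩ := exists_orderOf_eq
    have top_eq : ⊤ = zpowers a := eq_zpowers ⊤ a (mem_top a) (ha.trans exponent_top.symm)
    exact isCyclic_iff_exists_zpowers_eq_top.mpr ⟨a, top_eq.symm⟩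
  · intro _ H a ha ha_order
    exact eq_zpowers_of_orderOf_eq_exponent ha ha_order

theorem stmt_3 (G : Type*) [CommGroup G] [Fintype G] :
    SG G = Nat.card G ↔ IsCyclic G := by
  have exists_max : ∃ a : G, orderOf a = exponent G := exists_orderOf_eq_exponent .of_finite
  exact stmt_3_general G exists_max
end

section
/- Let $p$ be a prime and let $G$ be a non-abelian group of order $p^n$ with $n \geq 4$. If $G$ has a cyclic maximal subgroup (i.e., a cyclic subgroup of order $p^{n-1}$), then $S(G) > |G|$. -/
/-!
`SG G` counts the pairs `(H, a)` with `a ∈ H` of order `exp H`. Every `g : G` yields such a pair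
`(⟨g⟩, g)`, because the exponent of a cyclic group is the order of each generator; hence
`|G| ≤ SG G`, and any pair with `H` not cyclic makes the inequality strict. A noncyclic Sylow
subgroup provides one, since the exponent of a finite `p`-group is attained by some element.
-/

section SubgroupPairs

variable {G : Type*} [Group G]

theorem SG_eq_card_sigma [Finite G] :
    SG G = Nat.card (Σ H : Subgroup G, {a : H // orderOf a = Monoid.exponent H}) := by
  have : Fintype (Subgroup G) := Fintype.ofFinite _
  simp only [SG, phiG, finsum_eq_sum_of_fintype, Nat.card_sigma]

theorem orderOf_eq_exponent_zpowers (g : G) :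
    orderOf (⟨g, Subgroup.mem_zpowers g⟩ : Subgroup.zpowers g) =
      Monoid.exponent (Subgroup.zpowers g) := by
  rw [IsCyclic.exponent_eq_card, Nat.card_zpowers, Subgroup.orderOf_mk]

/-- The element `g` together with the cyclic subgroup it generates, as one of the pairs counted
by `SG G`. -/
def zpowersPair (g : G) : Σ H : Subgroup G, {a : H // orderOf a = Monoid.exponent H} :=
  ⟨Subgroup.zpowers g, ⟨g, Subgroup.mem_zpowers g⟩, orderOf_eq_exponent_zpowers g⟩

theorem zpowersPair_injective : Function.Injective (zpowersPair (G := G)) :=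
  Function.LeftInverse.injective (g := fun t ↦ (t.2.1 : G)) fun _ ↦ rfl

theorem card_lt_SG_of_not_isCyclic [Finite G] {H : Subgroup G} (hH : ¬ IsCyclic H) {a : H}
    (ha : orderOf a = Monoid.exponent H) : Nat.card G < SG G := by
  rw [SG_eq_card_sigma]
  by_contra! card_le
  obtain ⟨g, hg⟩ := (zpowersPair_injective.bijective_of_nat_card_le card_le).surjective ⟨H, a, ha⟩
  obtain rfl : Subgroup.zpowers g = H := congrArg Sigma.fst hg
  exact hH inferInstance

end SubgroupPairs

theorem exists_orderOf_eq_exponent_of_eq_prime_pow {G : Type*} [Monoid G] {p k : ℕ} (hp : p.Prime)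
    (h : Monoid.exponent G = p ^ k) : ∃ g : G, orderOf g = Monoid.exponent G := by
  simpa only [h, hp.factorization_pow, Finsupp.single_eq_same] using
    hp.exists_orderOf_eq_pow_factorization_exponent G

theorem stmt_7_general {G : Type*} [Group G] [Finite G] (hG : ¬ IsZGroup G) :
    Nat.card G < SG G := by
  simp only [isZGroup_iff, not_forall] at hG
  obtain ⟨p, hp, P, hP⟩ := hG
  have : Fact p.Prime := ⟨hp⟩
  obtain ⟨k, hk⟩ := P.isPGroup'.exists_exponent_eq_pow
  obtain ⟨a, ha⟩ := exists_orderOf_eq_exponent_of_eq_prime_pow hp hk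
  exact card_lt_SG_of_not_isCyclic hP ha

theorem stmt_7 (p : ℕ) (hp : p.Prime) (n : ℕ) (hn : 4 ≤ n)
    (G : Type*) [Group G] [Fintype G] (hG : Nat.card G = p ^ n)
    (hna : ¬ ∀ a b : G, a * b = b * a)
    (M : Subgroup G) (hMcard : Nat.card M = p ^ (n - 1))
    (hMcyc : IsCyclic M) :
    SG G > Nat.card G := by
  have : Fact p.Prime := ⟨hp⟩
  have : Group.IsNilpotent G := (IsPGroup.of_card hG).isNilpotent
  exact stmt_7_general fun _ ↦ hna (IsMulCommutative.is_comm (M := G)).comm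
end

section
/- For every $n \geq 4$, the quasi-dihedral (semidihedral) group $S_{2^n}$ of order $2^n$ satisfies $S(S_{2^n}) = (2n+9) \cdot 2^{n-3}$. -/
/-!
Let `C` be a cyclic subgroup of index two in a noncyclic `2`-group `G`, with `|C| = 2 ^ c`. The
subgroups of `C` contribute `∑ d ∣ 2 ^ c, φ d = 2 ^ c` to `SG G`. A subgroup `H` not contained in
`C` has exponent `max |H ⊓ C| (orderOf g)` for every `g ∈ H \ C`, so `2 * phiG H` is a sum over
`g ∈ H \ C` of a weight depending only on `|H ⊓ C|` and `orderOf g`. Interchanging the sums over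
`H` and `g`, the subgroups containing a fixed `g ∉ C` correspond, via `H ↦ H ⊓ C`, to the subgroups
of `C` containing `g ^ 2`, hence to the divisors of `2 ^ c` divisible by `orderOf (g ^ 2)`, and the
total weight of `g` is `c + 5 - log₂ (orderOf g)`.

In the semidihedral group with `C = ⟨x⟩`, `z = x ^ 2 ^ (c - 1)` and `g ∉ C` one has
`(x * g) ^ 2 = z * g ^ 2` and `g ^ 2 ∈ {1, z}`, so one of `g`, `x * g` has order `2` and the other
has order `4`.
-/

open scoped Classical in
theorem phiG_subgroup_eq_card_filter {G : Type*} [Group G] [Fintype G] (H : Subgroup G) :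
    phiG H = Finset.card {a : G | a ∈ H ∧ orderOf a = Monoid.exponent H} := by
  rw [phiG, Nat.card_eq_fintype_card, ← Fintype.card_subtype]
  refine Fintype.card_congr ((Equiv.subtypeEquivRight fun a => ?_).trans
    (Equiv.subtypeSubtypeEquivSubtypeInter (· ∈ H) (orderOf · = Monoid.exponent H)))
  rw [Subgroup.orderOf_coe]

theorem phiG_eq_totient_card (G : Type*) [Group G] [Finite G] [IsCyclic G] :
    phiG G = (Nat.card G).totient := by
  classical
  have := Fintype.ofFinite G
  rw [phiG, IsCyclic.exponent_eq_card, Nat.card_eq_fintype_card, Fintype.card_subtype,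
    IsCyclic.card_orderOf_eq_totient (by rw [Nat.card_eq_fintype_card])]

open scoped Classical in
theorem card_filter_orderOf_eq_of_card_dvd {G : Type*} [Group G] [Fintype G] (K : Subgroup G)
    [IsCyclic K] {e : ℕ} (hK : Nat.card K ∣ e) :
    Finset.card {a : G | a ∈ K ∧ orderOf a = e} = if Nat.card K = e then e.totient else 0 := by
  split_ifs with h
  · rw [← h, ← phiG_eq_totient_card, phiG_subgroup_eq_card_filter, IsCyclic.exponent_eq_card]
  · refine Finset.card_eq_zero.2 (Finset.filter_eq_empty_iff.2 ?_)
    rintro a - ⟨haK, rfl⟩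
    exact h (Nat.dvd_antisymm hK (K.orderOf_dvd_natCard haK))

theorem card_dvd_exponent_of_le_of_isCyclic {G : Type*} [Group G] {H K : Subgroup G} [Finite K]
    [IsCyclic K] (hK : K ≤ H) : Nat.card K ∣ Monoid.exponent H := by
  rw [← IsCyclic.exponent_eq_card]
  exact Monoid.exponent_dvd_of_monoidHom (Subgroup.inclusion hK) (Subgroup.inclusion_injective hK)

section CyclicSubgroup

variable {G : Type*} [Group G] {C K : Subgroup G} [Finite C] [IsCyclic C]

theorem mem_iff_orderOf_dvd_card_of_le_isCyclic (hK : K ≤ C) {a : G} (ha : a ∈ C) :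
    a ∈ K ↔ orderOf a ∣ Nat.card K := by
  classical
  have := Fintype.ofFinite C
  have : Finite K := Finite.Set.subset (C : Set G) hK
  have hsub : Finset.univ.filter (· ∈ K.subgroupOf C) ⊆
      Finset.univ.filter fun b : C => b ^ Nat.card K = 1 := by
    intro b hb
    simp only [Finset.mem_filter_univ, Subgroup.mem_subgroupOf] at hb ⊢
    exact Subtype.ext (orderOf_dvd_iff_pow_eq_one.1 (K.orderOf_dvd_natCard hb))
  have hcard : Finset.card (Finset.univ.filter (· ∈ K.subgroupOf C)) = Nat.card K := by
    rw [← Fintype.card_subtype, ← Nat.card_eq_fintype_card]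
    exact Nat.card_congr (Subgroup.subgroupOfEquivOfLe hK).toEquiv
  have heq := Finset.eq_of_subset_of_card_le hsub
    (by rw [hcard]; exact IsCyclic.card_pow_eq_one_le Nat.card_pos)
  have hmem := Finset.ext_iff.1 heq ⟨a, ha⟩
  simpa [Subgroup.mem_subgroupOf, orderOf_dvd_iff_pow_eq_one, Subtype.ext_iff] using hmem

theorem eq_of_card_eq_of_le_isCyclic {L : Subgroup G} (hK : K ≤ C) (hL : L ≤ C)
    (h : Nat.card K = Nat.card L) : K = L := by
  have : Finite L := Finite.Set.subset (C : Set G) hL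
  refine Subgroup.eq_of_le_of_card_ge (fun a ha => ?_) h.ge
  rwa [mem_iff_orderOf_dvd_card_of_le_isCyclic hL (hK ha), ← h,
    ← mem_iff_orderOf_dvd_card_of_le_isCyclic hK (hK ha)]

theorem exists_le_card_eq_of_dvd_card_isCyclic {d : ℕ} (hd : d ∣ Nat.card C) :
    ∃ K ≤ C, Nat.card K = d := by
  obtain ⟨γ, hγ⟩ := IsCyclic.exists_ofOrder_eq_natCard (α := C)
  refine ⟨Subgroup.zpowers ((γ : G) ^ (Nat.card C / d)), ?_, ?_⟩
  · exact Subgroup.zpowers_le_of_mem (pow_mem γ.2 _)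
  · rw [← Subgroup.orderOf_coe] at hγ
    rw [Nat.card_zpowers, ← hγ,
      orderOf_pow_orderOf_div (hγ ▸ Nat.card_pos.ne') (hγ ▸ hd)]

theorem normal_of_le_isCyclic [C.Normal] (hK : K ≤ C) : K.Normal where
  conj_mem k hk g := by
    have hconj : orderOf (g * k * g⁻¹) = orderOf k :=
      MulEquiv.orderOf_eq (MulAut.conj g) k
    rw [mem_iff_orderOf_dvd_card_of_le_isCyclic hK (Subgroup.Normal.conj_mem ‹_› k (hK hk) g),
      hconj]
    exact K.orderOf_dvd_natCard hk

theorem eq_of_orderOf_eq_two_of_isCyclic {a b : G} (haC : a ∈ C) (hbC : b ∈ C)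
    (ha : orderOf a = 2) (hb : orderOf b = 2) : a = b := by
  classical
  have hmem : a ∈ Subgroup.zpowers b :=
    (mem_iff_orderOf_dvd_card_of_le_isCyclic (Subgroup.zpowers_le_of_mem hbC) haC).2
      (by rw [Nat.card_zpowers, ha, hb])
  have hfin : IsOfFinOrder b := orderOf_pos_iff.1 (by omega)
  rw [hfin.mem_zpowers_iff_mem_range_orderOf, hb] at hmem
  have ha1 : a ≠ 1 := by rintro rfl; simp at ha
  simpa [Finset.range_add_one, ha1, eq_comm] using hmem

end CyclicSubgroup

section SumOverCyclicSubgroup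

variable {G : Type*} [Group G] [Fintype G] {C : Subgroup G} [IsCyclic C]

open scoped Classical in
theorem sum_card_of_mem_of_le_isCyclic {M : Type*} [AddCommMonoid M] (F : ℕ → M)
    {a : G} (ha : a ∈ C) :
    ∑ K : Subgroup G with K ≤ C ∧ a ∈ K, F (Nat.card K) =
      ∑ d ∈ (Nat.card C).divisors with orderOf a ∣ d, F d := by
  refine Finset.sum_nbij (fun K => Nat.card K) ?_ ?_ ?_ fun _ _ => rfl
  · intro K hK
    obtain ⟨hKC, haK⟩ := (Finset.mem_filter_univ K).1 hK
    exact Finset.mem_filter.2 ⟨Nat.mem_divisors.2 ⟨Subgroup.card_dvd_of_le hKC, Nat.card_pos.ne'⟩,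
      K.orderOf_dvd_natCard haK⟩
  · intro K hK L hL h
    exact eq_of_card_eq_of_le_isCyclic ((Finset.mem_filter_univ K).1 hK).1
      ((Finset.mem_filter_univ L).1 hL).1 h
  · intro d hd
    obtain ⟨hdC, had⟩ := Finset.mem_filter.1 hd
    obtain ⟨K, hKC, rfl⟩ := exists_le_card_eq_of_dvd_card_isCyclic (Nat.dvd_of_mem_divisors hdC)
    exact ⟨K, (Finset.mem_filter_univ K).2
      ⟨hKC, (mem_iff_orderOf_dvd_card_of_le_isCyclic hKC ha).2 had⟩, rfl⟩

open scoped Classical in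
theorem sum_phiG_of_le_isCyclic :
    ∑ H : Subgroup G with H ≤ C, phiG H = Nat.card C := by
  calc ∑ H : Subgroup G with H ≤ C, phiG H
      = ∑ H : Subgroup G with H ≤ C ∧ 1 ∈ H, (Nat.card H).totient := by
        simp only [one_mem, and_true]
        refine Finset.sum_congr rfl fun H hH => ?_
        have : IsCyclic H := Subgroup.isCyclic_of_le (Finset.mem_filter.1 hH).2
        exact phiG_eq_totient_card H
    _ = ∑ d ∈ (Nat.card C).divisors, d.totient := by
        rw [sum_card_of_mem_of_le_isCyclic Nat.totient C.one_mem]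
        simp only [orderOf_one, one_dvd, Finset.filter_true]
    _ = Nat.card C := Nat.sum_totient _

end SumOverCyclicSubgroup

section IndexTwo

variable {G : Type*} [Group G] {C H L : Subgroup G} {g : G}

theorem eq_of_inf_eq_of_index_two (hC : C.index = 2) (hgH : g ∈ H) (hgL : g ∈ L) (hgC : g ∉ C)
    (h : H ⊓ C = L ⊓ C) : H = L := by
  have le_of_inf_eq : ∀ {A B : Subgroup G}, g ∈ A → g ∈ B → A ⊓ C = B ⊓ C → A ≤ B := by
    intro A B hgA hgB hAB a ha
    by_cases haC : a ∈ C
    · exact (hAB ▸ Subgroup.mem_inf.2 ⟨ha, haC⟩ : a ∈ B ⊓ C).1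
    · have hag : a * g ∈ A ⊓ C :=
        ⟨mul_mem ha hgA, (Subgroup.mul_mem_iff_of_index_two hC).2 (iff_of_false haC hgC)⟩
      exact (B.mul_mem_cancel_right hgB).1 (hAB ▸ hag : a * g ∈ B ⊓ C).1
  exact le_antisymm (le_of_inf_eq hgH hgL h) (le_of_inf_eq hgL hgH h.symm)

theorem sup_zpowers_inf_eq_of_sq_mem {K : Subgroup G} [K.Normal] (hKC : K ≤ C) (hgC : g ∉ C)
    (hgK : g ^ 2 ∈ K) : (K ⊔ Subgroup.zpowers g) ⊓ C = K := by
  refine le_antisymm ?_ (le_inf le_sup_left hKC)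
  rintro a ⟨ha, haC⟩
  obtain ⟨k, hk, -, ⟨i, rfl⟩, rfl⟩ := Subgroup.mem_sup_of_normal_left.1 ha
  have hgi : g ^ i ∈ C := (C.mul_mem_cancel_left (hKC hk)).1 haC
  refine K.mul_mem hk ?_
  obtain ⟨j, rfl | rfl⟩ := Int.even_or_odd' i
  · simpa only [zpow_mul, zpow_ofNat] using K.zpow_mem hgK j
  · rw [zpow_add_one, zpow_mul, zpow_ofNat] at hgi
    exact absurd ((C.mul_mem_cancel_left (C.zpow_mem (hKC hgK) j)).1 hgi) hgC

open scoped Classical in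
theorem card_filter_mem_notMem_of_index_two [Fintype G] (hC : C.index = 2) (hgH : g ∈ H)
    (hgC : g ∉ C) : Finset.card {a : G | a ∈ H ∧ a ∉ C} = Nat.card (H ⊓ C : Subgroup G) := by
  rw [Nat.card_eq_fintype_card, Fintype.card_subtype (· ∈ H ⊓ C)]
  refine Finset.card_nbij' (· * g) (· * g⁻¹) ?_ ?_ (fun a _ => mul_inv_cancel_right a g)
    fun a _ => inv_mul_cancel_right a g
  · intro a ha
    obtain ⟨haH, haC⟩ := (Finset.mem_filter_univ a).1 ha
    exact (Finset.mem_filter_univ _).2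
      ⟨mul_mem haH hgH, (Subgroup.mul_mem_iff_of_index_two hC).2 (iff_of_false haC hgC)⟩
  · intro a ha
    obtain ⟨haH, haC⟩ := (Finset.mem_filter_univ a).1 ha
    refine (Finset.mem_filter_univ _).2 ⟨mul_mem haH (inv_mem hgH), fun h => hgC ?_⟩
    exact inv_mem_iff.1 ((C.mul_mem_cancel_left haC).1 h)

open scoped Classical in
theorem sum_inf_of_mem_of_index_two [Fintype G] {M : Type*} [AddCommMonoid M]
    (hC : C.index = 2) (hnormal : ∀ K ≤ C, K.Normal) (hgC : g ∉ C) (F : Subgroup G → M) :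
    ∑ H : Subgroup G with g ∈ H, F (H ⊓ C) = ∑ K : Subgroup G with K ≤ C ∧ g ^ 2 ∈ K, F K := by
  refine Finset.sum_nbij (· ⊓ C) ?_ ?_ ?_ fun _ _ => rfl
  · intro H hH
    have hgH : g ∈ H := (Finset.mem_filter.1 hH).2
    exact (Finset.mem_filter_univ _).2
      ⟨inf_le_right, pow_mem hgH 2, Subgroup.sq_mem_of_index_two hC g⟩
  · intro H hH L hL h
    exact eq_of_inf_eq_of_index_two hC (Finset.mem_filter.1 hH).2 (Finset.mem_filter.1 hL).2 hgC h
  · intro K hK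
    obtain ⟨hKC, hgK⟩ := (Finset.mem_filter_univ K).1 hK
    have := hnormal K hKC
    exact ⟨K ⊔ Subgroup.zpowers g,
      (Finset.mem_filter_univ _).2 (Subgroup.mem_sup_right (Subgroup.mem_zpowers g)),
      sup_zpowers_inf_eq_of_sq_mem hKC hgC hgK⟩

theorem mul_pow_two_mul_of_index_two [IsMulCommutative C] (hC : C.index = 2) {k : G}
    (hk : k ∈ C) (g : G) (s : ℕ) :
    (k * g) ^ (2 * s) = k ^ s * (g * k ^ s * g⁻¹) * g ^ (2 * s) := by
  have : C.Normal := Subgroup.normal_of_index_eq_two hC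
  have hcomm : ∀ {a b : G}, a ∈ C → b ∈ C → Commute a b := fun ha hb =>
    congrArg Subtype.val (IsMulCommutative.is_comm.comm (⟨_, ha⟩ : C) ⟨_, hb⟩)
  have hconj : g * k * g⁻¹ ∈ C := Subgroup.Normal.conj_mem ‹_› k hk g
  have hsq : (k * g) ^ 2 = k * (g * k * g⁻¹) * g ^ 2 := by
    simp only [sq, mul_assoc, inv_mul_cancel_left]
  rw [pow_mul, hsq,
    (hcomm (mul_mem hk hconj) (Subgroup.sq_mem_of_index_two hC g)).mul_pow,
    (hcomm hk hconj).mul_pow, conj_pow, pow_mul]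

theorem exists_orderOf_eq_two_pow_succ_of_index_two {c : ℕ} (hC : C.index = 2)
    (hcard : Nat.card C = 2 ^ c) (hgC : g ∉ C) : ∃ j ≤ c, orderOf g = 2 ^ (j + 1) := by
  have hdvd : orderOf g ∣ 2 ^ (c + 1) := by
    rw [pow_succ, ← hcard, ← hC, C.card_mul_index]
    exact orderOf_dvd_natCard g
  obtain ⟨_ | j, hj, hg⟩ := (Nat.dvd_prime_pow Nat.prime_two).1 hdvd
  · rw [pow_zero, orderOf_eq_one_iff] at hg
    exact absurd (hg ▸ C.one_mem) hgC
  · exact ⟨j, by omega, hg⟩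

theorem orderOf_sq_of_orderOf_eq_two_pow_succ {j : ℕ} (hg : orderOf g = 2 ^ (j + 1)) :
    orderOf (g ^ 2) = 2 ^ j := by
  rw [orderOf_pow_of_dvd two_ne_zero (hg ▸ dvd_pow_self 2 j.succ_ne_zero), hg, pow_succ,
    Nat.mul_div_cancel _ two_pos]

variable [Finite C] [IsCyclic C]

theorem mul_conj_eq_one_of_sq_eq_one [C.Normal] {u : G} (hu : u ∈ C) (hu2 : u ^ 2 = 1) (g : G) :
    u * (g * u * g⁻¹) = 1 := by
  by_cases hu1 : u = 1
  · simp only [hu1, mul_one, mul_inv_cancel]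
  have horder : orderOf u = 2 := orderOf_eq_prime hu2 hu1
  have hconj : g * u * g⁻¹ = u :=
    eq_of_orderOf_eq_two_of_isCyclic (Subgroup.Normal.conj_mem ‹_› u hu g) hu
      ((MulEquiv.orderOf_eq (MulAut.conj g) u).trans horder) horder
  rw [hconj, ← sq, hu2]

theorem mul_pow_two_mul_eq_one_of_index_two (hC : C.index = 2) {k : G} (hk : k ∈ C) {s : ℕ}
    (hks : k ^ (2 * s) = 1) (hgs : g ^ (2 * s) = 1) : (k * g) ^ (2 * s) = 1 := by
  have : C.Normal := Subgroup.normal_of_index_eq_two hC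
  have hks2 : (k ^ s) ^ 2 = 1 := by rwa [← pow_mul, mul_comm]
  rw [mul_pow_two_mul_of_index_two hC hk,
    mul_conj_eq_one_of_sq_eq_one (pow_mem hk s) hks2, hgs, one_mul]

theorem exponent_dvd_of_index_two (hC : C.index = 2) {e : ℕ} (he : 2 ∣ e)
    (hcard : Nat.card (H ⊓ C : Subgroup G) ∣ e) (hgH : g ∈ H) (hgC : g ∉ C)
    (hg : orderOf g ∣ e) : Monoid.exponent H ∣ e := by
  obtain ⟨s, rfl⟩ := he
  have inf_pow_eq_one : ∀ a ∈ H ⊓ C, a ^ (2 * s) = 1 := fun a ha =>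
    orderOf_dvd_iff_pow_eq_one.1 (((H ⊓ C).orderOf_dvd_natCard ha).trans hcard)
  refine Monoid.exponent_dvd_of_forall_pow_eq_one fun ⟨a, haH⟩ => Subtype.ext ?_
  change a ^ (2 * s) = 1
  by_cases haC : a ∈ C
  · exact inf_pow_eq_one a ⟨haH, haC⟩
  · have hag : a * g⁻¹ ∈ H ⊓ C := Subgroup.mem_inf.2 ⟨mul_mem haH (inv_mem hgH),
      (Subgroup.mul_mem_iff_of_index_two hC).2 (iff_of_false haC (mt inv_mem_iff.1 hgC))⟩
    simpa only [inv_mul_cancel_right] using mul_pow_two_mul_eq_one_of_index_two hC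
      (Subgroup.mem_inf.1 hag).2 (inf_pow_eq_one _ hag) (orderOf_dvd_iff_pow_eq_one.1 hg)

end IndexTwo

/-- The weight `w` for which `2 * phiG H` is the sum of `w |H ⊓ C| (orderOf g)` over `g ∈ H \ C`,
where `C` is a cyclic subgroup of index two in a `2`-group and `H` is not contained in `C`. The
first summand accounts for the `|H ⊓ C| / 2` generators of `H ⊓ C` when their order is the exponent
of `H`, the second for `g` itself. -/
def exponentWeight (a d : ℕ) : ℕ :=
  (if d ≤ a then 1 else 0) + if a ≤ d then 2 else 0

theorem filter_two_pow_dvd_divisors_two_pow (j c : ℕ) :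
    (2 ^ c).divisors.filter (2 ^ j ∣ ·) =
      (Finset.Icc j c).map ⟨(2 ^ ·), Nat.pow_right_injective le_rfl⟩ := by
  ext d
  simp only [Finset.mem_filter, Nat.mem_divisors_prime_pow Nat.prime_two, Finset.mem_map,
    Finset.mem_Icc, Function.Embedding.coeFn_mk]
  constructor
  · rintro ⟨⟨k, hk, rfl⟩, hjk⟩
    exact ⟨k, ⟨(Nat.pow_dvd_pow_iff_le_right one_lt_two).1 hjk, hk⟩, rfl⟩
  · rintro ⟨k, ⟨hjk, hk⟩, rfl⟩
    exact ⟨⟨k, hk, rfl⟩, pow_dvd_pow 2 hjk⟩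

theorem sum_exponentWeight_two_pow {j c : ℕ} (hj : j + 1 ≤ c) :
    ∑ d ∈ (2 ^ c).divisors with 2 ^ j ∣ d, exponentWeight d (2 ^ (j + 1)) = c + 4 - j := by
  have hle : (Finset.Icc j c).filter (· ≤ j + 1) = Finset.Icc j (j + 1) := by
    ext k; simp only [Finset.mem_filter, Finset.mem_Icc]; omega
  have hge : (Finset.Icc j c).filter (j + 1 ≤ ·) = Finset.Icc (j + 1) c := by
    ext k; simp only [Finset.mem_filter, Finset.mem_Icc]; omega
  rw [filter_two_pow_dvd_divisors_two_pow, Finset.sum_map]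
  simp only [Function.Embedding.coeFn_mk, exponentWeight, Nat.pow_le_pow_iff_right one_lt_two,
    Finset.sum_add_distrib, ← Finset.sum_filter, hle, hge, Finset.sum_const, Nat.card_Icc,
    smul_eq_mul]
  omega

section TwoGroup

variable {G : Type*} [Group G] {C H : Subgroup G} [IsCyclic C] {c : ℕ} {g : G}

theorem exponent_eq_max_card_inf_orderOf (hC : C.index = 2) (hcard : Nat.card C = 2 ^ c)
    (hgH : g ∈ H) (hgC : g ∉ C) :
    Monoid.exponent H = max (Nat.card (H ⊓ C : Subgroup G)) (orderOf g) := by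
  have : Finite C := Nat.finite_of_card_ne_zero (hcard ▸ by positivity)
  have : Finite (H ⊓ C : Subgroup G) := Finite.Set.subset (C : Set G) inf_le_right
  obtain ⟨k, -, hk⟩ := (Nat.dvd_prime_pow Nat.prime_two).1
    (hcard ▸ Subgroup.card_dvd_of_le (inf_le_right : H ⊓ C ≤ C))
  obtain ⟨j, -, hj⟩ := exists_orderOf_eq_two_pow_succ_of_index_two hC hcard hgC
  have hmax : max (Nat.card (H ⊓ C : Subgroup G)) (orderOf g) = 2 ^ max k (j + 1) := by
    rw [hk, hj, (pow_right_mono₀ one_le_two).map_max]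
  have : IsCyclic (H ⊓ C : Subgroup G) := Subgroup.isCyclic_of_le inf_le_right
  have hlower_order : orderOf g ∣ Monoid.exponent H := by
    rw [← Subgroup.orderOf_mk g hgH]
    exact Monoid.order_dvd_exponent _
  refine Nat.dvd_antisymm (exponent_dvd_of_index_two hC ?_ ?_ hgH hgC ?_) ?_
  · exact hmax ▸ dvd_pow_self 2 (by omega)
  · exact hmax ▸ hk ▸ pow_dvd_pow 2 (le_max_left k (j + 1))
  · exact hmax ▸ hj ▸ pow_dvd_pow 2 (le_max_right k (j + 1))
  · rcases max_choice (Nat.card (H ⊓ C : Subgroup G)) (orderOf g) with h | h <;> rw [h]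
    exacts [card_dvd_exponent_of_le_of_isCyclic inf_le_left, hlower_order]

variable [Fintype G]

open scoped Classical in
theorem two_mul_card_filter_mem_inf_orderOf_eq_exponent (hC : C.index = 2)
    (hcard : Nat.card C = 2 ^ c) (hH : ¬ H ≤ C) :
    2 * Finset.card {a : G | a ∈ H ⊓ C ∧ orderOf a = Monoid.exponent H} =
      if Nat.card (H ⊓ C : Subgroup G) = Monoid.exponent H
        then Nat.card (H ⊓ C : Subgroup G) else 0 := by
  have : IsCyclic (H ⊓ C : Subgroup G) := Subgroup.isCyclic_of_le inf_le_right
  rw [card_filter_orderOf_eq_of_card_dvd _ (card_dvd_exponent_of_le_of_isCyclic inf_le_left),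
    mul_ite, mul_zero]
  refine if_ctx_congr Iff.rfl (fun hexp => ?_) fun _ => rfl
  obtain ⟨k, -, hk⟩ := (Nat.dvd_prime_pow Nat.prime_two).1
    (hcard ▸ Subgroup.card_dvd_of_le (inf_le_right : H ⊓ C ≤ C))
  obtain ⟨g, hgH, hgC⟩ := SetLike.not_le_iff_exists.1 hH
  obtain ⟨j, -, hj⟩ := exists_orderOf_eq_two_pow_succ_of_index_two hC hcard hgC
  have hjk : 2 ^ (j + 1) ≤ 2 ^ k := by
    rw [← hj, ← hk, hexp, exponent_eq_max_card_inf_orderOf hC hcard hgH hgC]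
    exact le_max_right _ _
  obtain ⟨m, rfl⟩ := Nat.exists_eq_add_of_le' ((Nat.succ_pos j).trans_le
    ((Nat.pow_le_pow_iff_right one_lt_two).1 hjk))
  rw [← hexp, hk, Nat.totient_prime_pow_succ Nat.prime_two, pow_succ]
  ring

open scoped Classical in
theorem two_mul_phiG_of_not_le (hC : C.index = 2) (hcard : Nat.card C = 2 ^ c) (hH : ¬ H ≤ C) :
    2 * phiG H = ∑ g : G with g ∈ H ∧ g ∉ C,
      exponentWeight (Nat.card (H ⊓ C : Subgroup G)) (orderOf g) := by
  have hinner : 2 * Finset.card {a : G | a ∈ H ⊓ C ∧ orderOf a = Monoid.exponent H} =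
      ∑ g : G with g ∈ H ∧ g ∉ C, if orderOf g ≤ Nat.card (H ⊓ C : Subgroup G) then 1 else 0 := by
    obtain ⟨g₀, hg₀H, hg₀C⟩ := SetLike.not_le_iff_exists.1 hH
    have hiff : ∀ g ∈ Finset.univ.filter fun g : G => g ∈ H ∧ g ∉ C,
        orderOf g ≤ Nat.card (H ⊓ C : Subgroup G) ↔
          Nat.card (H ⊓ C : Subgroup G) = Monoid.exponent H := by
      intro g hg
      obtain ⟨hgH, hgC⟩ := (Finset.mem_filter_univ g).1 hg
      simp only [exponent_eq_max_card_inf_orderOf hC hcard hgH hgC, left_eq_sup]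
    rw [two_mul_card_filter_mem_inf_orderOf_eq_exponent hC hcard hH,
      Finset.sum_congr rfl fun g hg => if_congr (hiff g hg) rfl rfl, Finset.sum_ite_irrel,
      Finset.sum_const_zero, ← Finset.card_eq_sum_ones,
      card_filter_mem_notMem_of_index_two hC hg₀H hg₀C]
  have houter : 2 * Finset.card {g : G | (g ∈ H ∧ g ∉ C) ∧ orderOf g = Monoid.exponent H} =
      ∑ g : G with g ∈ H ∧ g ∉ C, if Nat.card (H ⊓ C : Subgroup G) ≤ orderOf g then 2 else 0 := by
    rw [mul_comm, ← smul_eq_mul, ← Finset.sum_const, ← Finset.filter_filter, Finset.sum_filter]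
    refine Finset.sum_congr rfl fun g hg => ?_
    obtain ⟨hgH, hgC⟩ := (Finset.mem_filter_univ g).1 hg
    simp only [exponent_eq_max_card_inf_orderOf hC hcard hgH hgC, right_eq_sup]
  calc 2 * phiG H
      = 2 * Finset.card {a : G | a ∈ H ⊓ C ∧ orderOf a = Monoid.exponent H} +
        2 * Finset.card {g : G | (g ∈ H ∧ g ∉ C) ∧ orderOf g = Monoid.exponent H} := by
        rw [phiG_subgroup_eq_card_filter, ← Finset.card_filter_add_card_filter_not (· ∈ C),
          Finset.filter_filter, Finset.filter_filter, mul_add]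
        simp only [Subgroup.mem_inf, and_right_comm]
    _ = _ := by rw [hinner, houter, ← Finset.sum_add_distrib]; rfl

open scoped Classical in
theorem sum_exponentWeight_card_inf_of_mem (hC : C.index = 2) (hcard : Nat.card C = 2 ^ c)
    (hG : ¬ IsCyclic G) (hgC : g ∉ C) :
    ∑ H : Subgroup G with g ∈ H, exponentWeight (Nat.card (H ⊓ C : Subgroup G)) (orderOf g) =
      c + 5 - Nat.log 2 (orderOf g) := by
  have : C.Normal := Subgroup.normal_of_index_eq_two hC
  obtain ⟨j, hj, hg⟩ := exists_orderOf_eq_two_pow_succ_of_index_two hC hcard hgC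
  have hjc : j ≠ c := by
    rintro rfl
    refine hG (isCyclic_of_orderOf_eq_card g ?_)
    rw [hg, pow_succ, ← hcard, ← hC, C.card_mul_index]
  rw [sum_inf_of_mem_of_index_two hC (fun _ => normal_of_le_isCyclic) hgC
      fun K => exponentWeight (Nat.card K) (orderOf g),
    sum_card_of_mem_of_le_isCyclic (exponentWeight · (orderOf g))
      (Subgroup.sq_mem_of_index_two hC g),
    hcard, orderOf_sq_of_orderOf_eq_two_pow_succ hg, hg,
    sum_exponentWeight_two_pow (by omega), Nat.log_pow one_lt_two]
  omega

open scoped Classical in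
theorem two_mul_SG_of_isCyclic_of_index_two (hC : C.index = 2) (hcard : Nat.card C = 2 ^ c)
    (hG : ¬ IsCyclic G) :
    2 * SG G = 2 ^ (c + 1) + ∑ g : G with g ∉ C, (c + 5 - Nat.log 2 (orderOf g)) := by
  have hnot_le : 2 * ∑ H : Subgroup G with ¬ H ≤ C, phiG H =
      ∑ g : G with g ∉ C, (c + 5 - Nat.log 2 (orderOf g)) := by
    calc 2 * ∑ H : Subgroup G with ¬ H ≤ C, phiG H
        = ∑ H : Subgroup G with ¬ H ≤ C, ∑ g : G with g ∈ H ∧ g ∉ C,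
            exponentWeight (Nat.card (H ⊓ C : Subgroup G)) (orderOf g) := by
          rw [Finset.mul_sum]
          exact Finset.sum_congr rfl fun H hH =>
            two_mul_phiG_of_not_le hC hcard (Finset.mem_filter.1 hH).2
      _ = ∑ g : G with g ∉ C, ∑ H : Subgroup G with g ∈ H,
            exponentWeight (Nat.card (H ⊓ C : Subgroup G)) (orderOf g) := by
          refine Finset.sum_comm' fun H g => ?_
          simp only [Finset.mem_filter_univ]
          exact ⟨fun h => h.2, fun h => ⟨fun hHC => h.2 (hHC h.1), h⟩⟩
      _ = ∑ g : G with g ∉ C, (c + 5 - Nat.log 2 (orderOf g)) :=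
          Finset.sum_congr rfl fun g hg =>
            sum_exponentWeight_card_inf_of_mem hC hcard hG (Finset.mem_filter.1 hg).2
  rw [SG, finsum_eq_sum_of_fintype, ← Finset.sum_filter_add_sum_filter_not _ (· ≤ C),
    sum_phiG_of_le_isCyclic, mul_add, hnot_le, hcard, pow_succ']

end TwoGroup

section Semidihedral

variable {G : Type*} [Group G] {c : ℕ} {x y g : G}

theorem not_commute_of_conj_eq_pow (hc : 2 ≤ c) (hx : orderOf x = 2 ^ (c + 1))
    (hxy : y⁻¹ * x * y = x ^ (2 ^ c - 1)) : ¬ Commute x y := by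
  intro h
  have hc4 : 2 ^ 2 ≤ 2 ^ c := Nat.pow_le_pow_right two_pos hc
  rw [mul_assoc, h.eq, inv_mul_cancel_left] at hxy
  have hmod := pow_inj_mod.1 ((pow_one x).trans hxy)
  rw [hx, pow_succ, Nat.mod_eq_of_lt (by omega), Nat.mod_eq_of_lt (by omega)] at hmod
  omega

theorem conj_eq_pow_of_notMem_zpowers {s : ℕ} (hindex : (Subgroup.zpowers x).index = 2)
    (hy : y ∉ Subgroup.zpowers x) (hxy : y⁻¹ * x * y = x ^ s) (hg : g ∉ Subgroup.zpowers x) :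
    g⁻¹ * x * g = x ^ s := by
  have hgy : g * y⁻¹ ∈ Subgroup.zpowers x :=
    (Subgroup.mul_mem_iff_of_index_two hindex).2 (iff_of_false hg (mt inv_mem_iff.1 hy))
  obtain ⟨i, hi⟩ := Subgroup.mem_zpowers_iff.1 hgy
  rw [← hxy, ← eq_mul_inv_iff_mul_eq.1 hi]
  group

theorem sq_mul_of_conj_eq_pow {s : ℕ} (hindex : (Subgroup.zpowers x).index = 2)
    (hxg : g⁻¹ * x * g = x ^ s) : (x * g) ^ 2 = x ^ (s + 1) * g ^ 2 := by
  obtain ⟨i, hi⟩ := Subgroup.mem_zpowers_iff.1 (Subgroup.sq_mem_of_index_two hindex g)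
  have hgx : Commute (g ^ 2) (x ^ s) := hi ▸ ((Commute.refl x).zpow_left i).pow_right s
  calc (x * g) ^ 2 = x * (g ^ 2 * (g⁻¹ * x * g)) := by
        simp only [sq, mul_assoc, mul_inv_cancel_left]
    _ = x ^ (s + 1) * g ^ 2 := by rw [hxg, hgx.eq, ← mul_assoc, pow_succ' x]

theorem sq_pow_sub_one_eq_one_of_conj_eq_pow {s : ℕ} (hindex : (Subgroup.zpowers x).index = 2)
    (hs : 1 ≤ s) (hxg : g⁻¹ * x * g = x ^ s) : (g ^ 2) ^ (s - 1) = 1 := by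
  obtain ⟨i, hi⟩ := Subgroup.mem_zpowers_iff.1 (Subgroup.sq_mem_of_index_two hindex g)
  have hfix : g ^ 2 = (g ^ 2) ^ s := by
    calc g ^ 2 = g⁻¹ * g ^ 2 * g := by simp only [sq]; group
      _ = (g⁻¹ * x * g) ^ i := by
        simpa only [hi, inv_inv] using (conj_zpow (i := i) (a := g⁻¹) (b := x)).symm
      _ = (g ^ 2) ^ s := by rw [hxg, ← hi, ← zpow_natCast, ← zpow_natCast, zpow_comm]
  rw [pow_sub _ hs, ← hfix, pow_one, mul_inv_cancel]

theorem pow_four_eq_one_of_notMem_zpowers (hc : 2 ≤ c) (hx : orderOf x = 2 ^ (c + 1))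
    (hindex : (Subgroup.zpowers x).index = 2) (hg : g ∉ Subgroup.zpowers x)
    (hxg : g⁻¹ * x * g = x ^ (2 ^ c - 1)) : g ^ 4 = 1 := by
  have hc4 : 2 ^ 2 ∣ 2 ^ c := pow_dvd_pow 2 hc
  have hcpos : 0 < 2 ^ c := pow_pos two_pos c
  have hdvd : orderOf (g ^ 2) ∣ 2 ^ c - 1 - 1 := orderOf_dvd_of_pow_eq_one <|
    sq_pow_sub_one_eq_one_of_conj_eq_pow hindex (by have := Nat.le_of_dvd hcpos hc4; omega) hxg
  obtain ⟨j, -, hj⟩ := exists_orderOf_eq_two_pow_succ_of_index_two hindex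
    ((Nat.card_zpowers x).trans hx) hg
  have hj1 : j ≤ 1 := by
    by_contra! hj1
    have : 2 ^ 2 ∣ 2 ^ c - 1 - 1 := (pow_dvd_pow 2 hj1).trans
      (orderOf_sq_of_orderOf_eq_two_pow_succ hj ▸ hdvd)
    omega
  exact orderOf_dvd_iff_pow_eq_one.1 (hj ▸ pow_dvd_pow 2 (Nat.succ_le_succ hj1))

theorem orderOf_eq_two_and_four_or_four_and_two (hc : 2 ≤ c) (hx : orderOf x = 2 ^ (c + 1))
    (hindex : (Subgroup.zpowers x).index = 2) (hg : g ∉ Subgroup.zpowers x)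
    (hxg : g⁻¹ * x * g = x ^ (2 ^ c - 1)) :
    orderOf g = 2 ∧ orderOf (x * g) = 4 ∨ orderOf g = 4 ∧ orderOf (x * g) = 2 := by
  have hg1 : ∀ a, a ∉ Subgroup.zpowers x → a ≠ 1 := fun a ha ha1 => ha (ha1 ▸ one_mem _)
  have hxgC : x * g ∉ Subgroup.zpowers x := fun h =>
    hg (((Subgroup.zpowers x).mul_mem_cancel_left (Subgroup.mem_zpowers x)).1 h)
  have hz : orderOf (x ^ 2 ^ c) = 2 := by
    rw [orderOf_pow_of_dvd (by positivity) (hx ▸ pow_dvd_pow 2 c.le_succ), hx, pow_succ,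
      Nat.mul_div_cancel_left _ (by positivity)]
  have hz2 : (x ^ 2 ^ c) ^ 2 = 1 := orderOf_dvd_iff_pow_eq_one.1 hz.dvd
  have hg4 := pow_four_eq_one_of_notMem_zpowers hc hx hindex hg hxg
  have hsq : (x * g) ^ 2 = x ^ 2 ^ c * g ^ 2 := by
    rw [sq_mul_of_conj_eq_pow hindex hxg, Nat.sub_add_cancel Nat.one_le_two_pow]
  have : Finite (Subgroup.zpowers x) :=
    (orderOf_pos_iff.1 (hx ▸ pow_pos two_pos (c + 1))).finite_zpowers
  by_cases hg2 : g ^ 2 = 1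
  · refine .inl ⟨orderOf_eq_prime hg2 (hg1 g hg), orderOf_eq_prime_pow (n := 1) (p := 2) ?_ ?_⟩
    · rw [pow_one, hsq, hg2, mul_one, ← orderOf_eq_one_iff, hz]
      decide
    · rw [one_add_one_eq_two, sq 2, pow_mul, hsq, hg2, mul_one, hz2]
  · refine .inr ⟨orderOf_eq_prime_pow (n := 1) (p := 2) (by rwa [pow_one]) hg4,
      orderOf_eq_prime ?_ (hg1 _ hxgC)⟩
    have hg2z : g ^ 2 = x ^ 2 ^ c :=
      eq_of_orderOf_eq_two_of_isCyclic (Subgroup.sq_mem_of_index_two hindex g)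
        (Subgroup.npow_mem_zpowers x _) (orderOf_eq_prime (by rwa [← pow_mul]) hg2) hz
    rw [hsq, hg2z, ← sq, hz2]

open scoped Classical in
theorem two_nsmul_sum_notMem_zpowers {M : Type*} [AddCommMonoid M] [Fintype G]
    (hc : 2 ≤ c) (hx : orderOf x = 2 ^ (c + 1))
    (hindex : (Subgroup.zpowers x).index = 2) (hy : y ∉ Subgroup.zpowers x)
    (hxy : y⁻¹ * x * y = x ^ (2 ^ c - 1)) (F : ℕ → M) :
    2 • ∑ g : G with g ∉ Subgroup.zpowers x, F (orderOf g) = 2 ^ (c + 1) • (F 2 + F 4) := by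
  have hcard : Finset.card {g : G | g ∉ Subgroup.zpowers x} = 2 ^ (c + 1) := by
    simpa only [Subgroup.mem_top, true_and, top_inf_eq, Nat.card_zpowers, hx] using
      card_filter_mem_notMem_of_index_two hindex (Subgroup.mem_top y) hy
  have hshift : ∑ g : G with g ∉ Subgroup.zpowers x, F (orderOf (x * g)) =
      ∑ g : G with g ∉ Subgroup.zpowers x, F (orderOf g) :=
    Finset.sum_equiv (Equiv.mulLeft x) (fun g => by
      simp [(Subgroup.zpowers x).mul_mem_cancel_left (Subgroup.mem_zpowers x)]) fun _ _ => rfl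
  have hpair : ∀ g ∈ Finset.univ.filter fun g : G => g ∉ Subgroup.zpowers x,
      F (orderOf g) + F (orderOf (x * g)) = F 2 + F 4 := by
    intro g hg
    have hgC := (Finset.mem_filter.1 hg).2
    obtain ⟨h, hxg⟩ | ⟨h, hxg⟩ :=
      orderOf_eq_two_and_four_or_four_and_two hc hx hindex hgC
        (conj_eq_pow_of_notMem_zpowers hindex hy hxy hgC)
    · rw [h, hxg]
    · rw [h, hxg, add_comm]
  rw [two_nsmul]
  nth_rw 2 [← hshift]
  rw [← Finset.sum_add_distrib, Finset.sum_congr rfl hpair, Finset.sum_const, hcard]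

theorem not_isCyclic_of_conj_eq_pow (hc : 2 ≤ c) (hx : orderOf x = 2 ^ (c + 1))
    (hxy : y⁻¹ * x * y = x ^ (2 ^ c - 1)) : ¬ IsCyclic G := fun _ =>
  not_commute_of_conj_eq_pow hc hx hxy (IsMulCommutative.is_comm.comm x y)

theorem notMem_zpowers_of_conj_eq_pow (hc : 2 ≤ c) (hx : orderOf x = 2 ^ (c + 1))
    (hxy : y⁻¹ * x * y = x ^ (2 ^ c - 1)) : y ∉ Subgroup.zpowers x := by
  rintro ⟨i, rfl⟩
  exact not_commute_of_conj_eq_pow hc hx hxy ((Commute.refl x).zpow_right i)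

end Semidihedral

theorem stmt_10_general (n : ℕ) (hn : 4 ≤ n) (G : Type*) [Group G] (x y : G)
    (hcard : Nat.card G = 2 ^ n) (hx : orderOf x = 2 ^ (n - 1))
    (hxy : y⁻¹ * x * y = x ^ (2 ^ (n - 2) - 1)) :
    SG G = (2 * n + 9) * 2 ^ (n - 3) := by
  classical
  obtain ⟨m, rfl⟩ := Nat.exists_eq_add_of_le' hn
  have : Finite G := Nat.finite_of_card_ne_zero (hcard ▸ by positivity)
  have := Fintype.ofFinite G
  have hm : 2 ≤ m + 2 := le_add_self
  have hcardC : Nat.card (Subgroup.zpowers x) = 2 ^ (m + 3) := (Nat.card_zpowers x).trans hx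
  have hindex : (Subgroup.zpowers x).index = 2 := by
    have hmul := (Subgroup.zpowers x).card_mul_index
    rw [hcardC, hcard] at hmul
    exact Nat.eq_of_mul_eq_mul_left (by positivity) hmul
  have hSG := two_mul_SG_of_isCyclic_of_index_two hindex hcardC
    (not_isCyclic_of_conj_eq_pow hm hx hxy)
  have houtside := two_nsmul_sum_notMem_zpowers hm hx hindex
    (notMem_zpowers_of_conj_eq_pow hm hx hxy) hxy fun d => m + 3 + 5 - Nat.log 2 d
  have hlog2 : Nat.log 2 2 = 1 := Nat.log_pow one_lt_two 1
  have hlog4 : Nat.log 2 4 = 2 := Nat.log_pow one_lt_two 2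
  rw [hlog2, hlog4, show m + 3 + 5 - 1 + (m + 3 + 5 - 2) = 2 * m + 13 by omega, smul_eq_mul,
    smul_eq_mul] at houtside
  simp only [show m + 4 - 3 = m + 1 from rfl, pow_succ] at hSG houtside ⊢
  linarith

/-- The quasi-dihedral (semidihedral) group of order `2 ^ n` is axiomatized by generators
`x, y` with `orderOf x = 2 ^ (n - 1)`, `y ^ 2 = 1`, `y⁻¹ * x * y = x ^ (2 ^ (n - 2) - 1)`,
generating a group of order `2 ^ n`. -/
theorem stmt_10 (n : ℕ) (hn : 4 ≤ n) (G : Type*) [Group G] [Fintype G]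
    (x y : G) (hcard : Nat.card G = 2 ^ n)
    (hx : orderOf x = 2 ^ (n - 1)) (hy : y ^ 2 = 1)
    (hxy : y⁻¹ * x * y = x ^ (2 ^ (n - 2) - 1))
    (hgen : Subgroup.closure {x, y} = ⊤) :
    SG G = (2 * n + 9) * 2 ^ (n - 3) :=
  stmt_10_general n hn G x y hcard hx hxy
end

section
/- For every $n \geq 4$ and every prime $p$, the modular maximal-cyclic group $M(p^n) = \langle x, y \mid x^{p^{n-1}} = y^p = 1,\ y^{-1} x y = x^{p^{n-2}+1} \rangle$ of order $p^n$ satisfies $S(M(p^n)) > p^n$. -/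
/-!
Every `g : G` is counted exactly once in `SG G` by a cyclic subgroup, namely the one it generates,
so the cyclic subgroups together contribute `Nat.card G`. The excess comes from the non-cyclic
subgroups in which some element has order equal to the exponent. Every non-cyclic finite `p`-group
contains such an element, while no non-cyclic Z-group does, because the exponent of a finite Z-group
is its order. So the excess is positive exactly when some Sylow subgroup of `G` is not cyclic, as is
the case for the non-commutative `p`-group `M(p^n)`.
-/

lemma exists_orderOf_eq_exponent_of_exponent_eq_prime_pow {M : Type*} [Monoid M] {p k : ℕ}
    (hp : p.Prime) (h : Monoid.exponent M = p ^ k) : ∃ a : M, orderOf a = Monoid.exponent M := by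
  simpa [h, hp.factorization_self] using hp.exists_orderOf_eq_pow_factorization_exponent M

section Group

variable {G : Type*} [Group G]

lemma phiG_pos_iff [Finite G] : 0 < phiG G ↔ ∃ a : G, orderOf a = Monoid.exponent G := by
  rw [phiG, Finite.card_pos_iff, nonempty_subtype]

lemma zpowers_coe_eq_iff_orderOf_eq_card {H : Subgroup G} [Finite H] (a : H) :
    Subgroup.zpowers (a : G) = H ↔ orderOf a = Nat.card H := by
  rw [← Subgroup.orderOf_coe, ← Nat.card_zpowers]
  refine ⟨fun h ↦ by rw [h], fun h ↦ ?_⟩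
  exact Subgroup.eq_of_le_of_card_ge (Subgroup.zpowers_le.mpr a.2) h.ge

lemma phiG_eq_card_zpowers_eq (H : Subgroup G) [Finite H] [IsCyclic H] :
    phiG H = Nat.card {g : G // Subgroup.zpowers g = H} := by
  simp_rw [phiG, IsCyclic.exponent_eq_card, ← zpowers_coe_eq_iff_orderOf_eq_card]
  exact Nat.card_congr (Equiv.subtypeSubtypeEquivSubtype (q := (Subgroup.zpowers · = H))
    fun {g} h ↦ h ▸ Subgroup.mem_zpowers g)

lemma not_commute_of_conj_eq_pow_succ {x y : G} {k : ℕ} (hxy : y⁻¹ * x * y = x ^ (k + 1))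
    (hk : ¬ orderOf x ∣ k) : ¬ Commute x y := by
  intro hcomm
  rw [mul_assoc, hcomm.eq, inv_mul_cancel_left, pow_succ, right_eq_mul] at hxy
  exact hk (orderOf_dvd_of_pow_eq_one hxy)

variable [Finite G]

variable (G) in
theorem finsum_phiG_isCyclic_eq_card :
    ∑ᶠ C : {H : Subgroup G // IsCyclic H}, phiG C.1 = Nat.card G := by
  cases nonempty_fintype {H : Subgroup G // IsCyclic H}
  let generatedBy (g : G) : {H : Subgroup G // IsCyclic H} := ⟨Subgroup.zpowers g, inferInstance⟩
  have phiG_eq_card_fiber (C : {H : Subgroup G // IsCyclic H}) :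
      phiG C.1 = Nat.card {g // generatedBy g = C} := by
    have := C.2
    simp_rw [phiG_eq_card_zpowers_eq, generatedBy, Subtype.ext_iff]
  calc ∑ᶠ C : {H : Subgroup G // IsCyclic H}, phiG C.1
      = ∑ C, Nat.card {g // generatedBy g = C} := by
        simp_rw [finsum_eq_sum_of_fintype, phiG_eq_card_fiber]
    _ = Nat.card G := by rw [← Nat.card_sigma, Nat.card_congr (Equiv.sigmaFiberEquiv generatedBy)]

variable (G) in
theorem SG_eq_card_add_finsum_not_isCyclic :
    SG G = Nat.card G + ∑ᶠ H : {H : Subgroup G // ¬ IsCyclic H}, phiG H.1 := by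
  classical
  cases nonempty_fintype (Subgroup G)
  rw [← finsum_phiG_isCyclic_eq_card, SG]
  simp_rw [finsum_eq_sum_of_fintype]
  exact (Fintype.sum_subtype_add_sum_subtype _ _).symm

theorem card_lt_SG_iff_exists_not_isCyclic :
    Nat.card G < SG G ↔
      ∃ H : Subgroup G, ¬ IsCyclic H ∧ ∃ a : H, orderOf a = Monoid.exponent H := by
  cases nonempty_fintype {H : Subgroup G // ¬ IsCyclic H}
  rw [SG_eq_card_add_finsum_not_isCyclic, lt_add_iff_pos_right, finsum_eq_sum_of_fintype]
  simp_rw [Finset.sum_pos_iff, Finset.mem_univ, true_and, phiG_pos_iff]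
  exact ⟨fun ⟨⟨H, hH⟩, ha⟩ ↦ ⟨H, hH, ha⟩, fun ⟨H, hH, ha⟩ ↦ ⟨⟨H, hH⟩, ha⟩⟩

lemma not_isZGroup_of_not_commute [Group.IsNilpotent G] {x y : G} (h : ¬ Commute x y) :
    ¬ IsZGroup G := by
  intro hG
  have : IsCyclic G := inferInstance
  exact h (mul_comm' x y)

end Group

theorem stmt_11_general {G : Type*} [Group G] [Finite G] :
    Nat.card G < SG G ↔ ¬ IsZGroup G := by
  rw [card_lt_SG_iff_exists_not_isCyclic]
  constructor
  · rintro ⟨H, hH, a, ha⟩ hG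
    exact hH (isCyclic_of_orderOf_eq_card a (ha.trans (IsZGroup.exponent_eq_card H)))
  · intro hG
    obtain ⟨p, hp, P, hP⟩ : ∃ p, p.Prime ∧ ∃ P : Sylow p G, ¬ IsCyclic P := by
      simpa only [isZGroup_iff, not_forall, exists_prop] using hG
    have : Fact p.Prime := ⟨hp⟩
    obtain ⟨k, hk⟩ := P.isPGroup'.exists_exponent_eq_pow
    exact ⟨P, hP, exists_orderOf_eq_exponent_of_exponent_eq_prime_pow hp hk⟩

/-- The modular maximal-cyclic group `M(p^n)` is axiomatized by generators `x, y` with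
`orderOf x = p ^ (n - 1)`, `y ^ p = 1`, `y⁻¹ * x * y = x ^ (p ^ (n - 2) + 1)`,
generating a group of order `p ^ n`. -/
theorem stmt_11 (p : ℕ) (hp : p.Prime) (n : ℕ) (hn : 4 ≤ n)
    (G : Type*) [Group G] [Fintype G]
    (x y : G) (hcard : Nat.card G = p ^ n)
    (hx : orderOf x = p ^ (n - 1)) (hy : y ^ p = 1)
    (hxy : y⁻¹ * x * y = x ^ (p ^ (n - 2) + 1))
    (hgen : Subgroup.closure {x, y} = ⊤) :
    SG G > p ^ n := by
  have : Fact p.Prime := ⟨hp⟩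
  have : Group.IsNilpotent G := (IsPGroup.of_card hcard).isNilpotent
  have hdvd : ¬ orderOf x ∣ p ^ (n - 2) := by
    rw [hx, Nat.pow_dvd_pow_iff_le_right hp.one_lt]
    omega
  have hcomm : ¬ Commute x y := not_commute_of_conj_eq_pow_succ hxy hdvd
  exact hcard ▸ stmt_11_general.mpr (not_isZGroup_of_not_commute hcomm)
end

section
/- Let $n \geq 2$ be even, write $n = 2^k m$ with $k \geq 1$ and $m$ odd, and let $D_{2n}$ be the dihedral group of order $2n$. Then $S(D_{2n}) = 3n + \frac{kn}{2} \sum_{d \mid m} \frac{\varphi(d)}{d}$, where $\varphi$ denotes the classical Euler totient function and the sum runs over the positive divisors $d$ of $m$. -/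
/-!
A subgroup of `D_{2n}` is a subgroup `A` of the rotations, possibly enlarged by one coset of `A` of
reflections. In the first case it is cyclic and has `φ(|A|)` generators. In the second its exponent
is `lcm(|A|, 2)`, so the rotations contribute `φ(|A|)` when `|A|` is even, and the reflections
contribute `|A|` when `|A|` divides `2`. There are `n / |A|` cosets for each `A`, and exactly one
`A` for each order dividing `n`, whence `S(D_{2n}) = n + n gcd(n, 2) + ∑ (n / d) φ(d)` over the
even divisors `d` of `n`. For `n = 2 ^ k m` such a `d` is `2 ^ j e` with `1 ≤ j ≤ k` and `e ∣ m`,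
and `φ(d) / d = φ(e) / (2 e)` does not depend on `j`.
-/

open DihedralGroup Finset

section Cyclic

theorem card_addOrderOf_eq_natCard_eq_totient {C : Type*} [AddGroup C] [IsAddCyclic C] [Finite C] :
    Nat.card {x : C // addOrderOf x = Nat.card C} = Nat.totient (Nat.card C) := by
  have := Fintype.ofFinite C
  rw [Nat.card_eq_fintype_card (α := C), Nat.card_eq_fintype_card, Fintype.card_subtype,
    IsAddCyclic.card_addOrderOf_eq_totient dvd_rfl]

variable {C : Type*} [AddCommGroup C] [IsAddCyclic C] [Finite C]

theorem eq_ker_nsmulAddMonoidHom_card (A : AddSubgroup C) :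
    A = (nsmulAddMonoidHom (Nat.card A) : C →+ C).ker := by
  refine AddSubgroup.eq_of_le_of_card_ge (fun x hx => ?_) ?_
  · exact addOrderOf_dvd_iff_nsmul_eq_zero.mp (A.addOrderOf_dvd_natCard hx)
  · rw [IsAddCyclic.card_nsmulAddMonoidHom_ker]
    exact Nat.gcd_le_right _ Nat.card_pos

theorem sum_addSubgroup_card_eq_sum_divisors [Fintype (AddSubgroup C)] {M : Type*}
    [AddCommMonoid M] (f : ℕ → M) :
    ∑ A : AddSubgroup C, f (Nat.card A) = ∑ d ∈ (Nat.card C).divisors, f d := by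
  refine sum_bij' (fun A _ => Nat.card A) (fun d _ => (nsmulAddMonoidHom d : C →+ C).ker)
    (fun A _ => Nat.mem_divisors.mpr ⟨A.card_addSubgroup_dvd_card, Nat.card_pos.ne'⟩)
    (fun _ _ => mem_univ _) (fun A _ => (eq_ker_nsmulAddMonoidHom_card A).symm) (fun d hd => ?_)
    (fun _ _ => rfl)
  rw [IsAddCyclic.card_nsmulAddMonoidHom_ker, Nat.gcd_eq_right (Nat.dvd_of_mem_divisors hd)]

end Cyclic

theorem card_subtype_mk_eq {G : Type*} [AddGroup G] (A : AddSubgroup G) (q : G ⧸ A) :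
    Nat.card {y : G // (y : G ⧸ A) = q} = Nat.card A := by
  refine (Nat.card_congr (QuotientAddGroup.preimageMkEquivAddSubgroupProdSet A {q})).trans ?_
  rw [Nat.card_prod, Nat.card_unique (α := ({q} : Set (G ⧸ A))), mul_one]

section Dihedral

variable {n : ℕ}

theorem orderOf_r_eq_addOrderOf (x : ZMod n) : orderOf (r x) = addOrderOf x :=
  Nat.dvd_right_iff_eq.mp fun d => by
    rw [orderOf_dvd_iff_pow_eq_one, addOrderOf_dvd_iff_nsmul_eq_zero, r_pow, one_def, r.injEq,
      nsmul_eq_mul, mul_comm]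

/-- The indices `x` of the rotations `r x` in a subgroup of `DihedralGroup n`. -/
def rotationIndices (H : Subgroup (DihedralGroup n)) : AddSubgroup (ZMod n) where
  carrier := {x | r x ∈ H}
  add_mem' hx hy := H.mul_mem hx hy
  zero_mem' := H.one_mem
  neg_mem' hx := H.inv_mem hx

theorem mem_rotationIndices {H : Subgroup (DihedralGroup n)} {x : ZMod n} :
    x ∈ rotationIndices H ↔ r x ∈ H :=
  Iff.rfl

theorem sr_mem_iff_of_sr_mem {H : Subgroup (DihedralGroup n)} {x y : ZMod n} (hy : sr y ∈ H) :
    sr x ∈ H ↔ (x : ZMod n ⧸ rotationIndices H) = y := by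
  rw [QuotientAddGroup.eq, mem_rotationIndices, neg_add_eq_sub, ← sr_mul_sr,
    H.mul_mem_cancel_right hy]

/-- The subgroup of `DihedralGroup n` with rotations `r x` for `x ∈ A` and reflections `sr y` for
`y` in the coset `q` of `A`; there are no reflections when `q = none`. -/
def cosetSubgroup (A : AddSubgroup (ZMod n)) (q : Option (ZMod n ⧸ A)) :
    Subgroup (DihedralGroup n) where
  carrier := {g | match g with
    | r x => x ∈ A
    | sr y => some (y : ZMod n ⧸ A) = q}
  mul_mem' := by
    rintro (x | x) (y | y) hx hy
    · exact A.add_mem hx hy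
    · refine Eq.trans (congrArg some (QuotientAddGroup.eq.mpr ?_)) hy
      simpa using hx
    · refine Eq.trans (congrArg some (QuotientAddGroup.eq.mpr ?_)) hx
      simpa using hy
    · have hxy : (x : ZMod n ⧸ A) = y := Option.some.inj (hx.trans hy.symm)
      simpa [neg_add_eq_sub] using QuotientAddGroup.eq.mp hxy
  one_mem' := A.zero_mem
  inv_mem' := by
    rintro (x | x) hx
    · exact A.neg_mem hx
    · exact hx

namespace cosetSubgroup

theorem r_mem {A : AddSubgroup (ZMod n)} {q : Option (ZMod n ⧸ A)} {x : ZMod n} :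
    r x ∈ cosetSubgroup A q ↔ x ∈ A :=
  Iff.rfl

theorem sr_mem {A : AddSubgroup (ZMod n)} {q : Option (ZMod n ⧸ A)} {y : ZMod n} :
    sr y ∈ cosetSubgroup A q ↔ some (y : ZMod n ⧸ A) = q :=
  Iff.rfl

theorem injective (A : AddSubgroup (ZMod n)) : Function.Injective (cosetSubgroup A) := by
  intro q q' h
  refine Option.ext (QuotientAddGroup.mk_surjective.forall.mpr fun y => ?_)
  simpa only [sr_mem, eq_comm] using SetLike.ext_iff.mp h (sr y)

theorem exists_eq (H : Subgroup (DihedralGroup n)) :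
    ∃ q, cosetSubgroup (rotationIndices H) q = H := by
  by_cases hH : ∃ y, sr y ∈ H
  · obtain ⟨y, hy⟩ := hH
    refine ⟨some y, SetLike.ext ?_⟩
    rintro (x | x)
    · exact Iff.rfl
    · rw [sr_mem, Option.some_inj, sr_mem_iff_of_sr_mem hy]
  · refine ⟨none, SetLike.ext ?_⟩
    rintro (x | x)
    · exact Iff.rfl
    · exact iff_of_false (Option.some_ne_none _) fun hx => hH ⟨x, hx⟩

theorem bijective : Function.Bijective
    fun p : Σ A : AddSubgroup (ZMod n), Option (ZMod n ⧸ A) => cosetSubgroup p.1 p.2 := by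
  constructor
  · rintro ⟨A, q⟩ ⟨B, q'⟩ h
    obtain rfl : A = B := congrArg rotationIndices h
    obtain rfl : q = q' := injective A h
    rfl
  · intro H
    obtain ⟨q, hq⟩ := exists_eq H
    exact ⟨⟨rotationIndices H, q⟩, hq⟩

theorem orderOf_mk_r (A : AddSubgroup (ZMod n)) (q : Option (ZMod n ⧸ A)) (x : A) :
    orderOf (⟨r x, r_mem.mpr x.2⟩ : cosetSubgroup A q) = addOrderOf x := by
  rw [Subgroup.orderOf_mk, orderOf_r_eq_addOrderOf, AddSubgroup.addOrderOf_coe]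

theorem orderOf_mk_sr {A : AddSubgroup (ZMod n)} {q : Option (ZMod n ⧸ A)} {y : ZMod n}
    (hy : sr y ∈ cosetSubgroup A q) : orderOf (⟨sr y, hy⟩ : cosetSubgroup A q) = 2 := by
  rw [Subgroup.orderOf_mk, orderOf_sr]

theorem exponent_dvd {A : AddSubgroup (ZMod n)} {q : Option (ZMod n ⧸ A)} {d : ℕ} :
    Monoid.exponent (cosetSubgroup A q) ∣ d ↔ Nat.card A ∣ d ∧ (q ≠ none → 2 ∣ d) := by
  rw [Monoid.exponent_dvd, ← IsAddCyclic.exponent_eq_card, AddMonoid.exponent_dvd]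
  constructor
  · refine fun h => ⟨fun x => ?_, fun hq => ?_⟩
    · exact orderOf_mk_r A q x ▸ h ⟨r x, x.2⟩
    · obtain ⟨c, rfl⟩ := Option.ne_none_iff_exists'.mp hq
      obtain ⟨y, rfl⟩ := QuotientAddGroup.mk_surjective c
      exact orderOf_mk_sr rfl ▸ h ⟨sr y, rfl⟩
  · rintro ⟨hA, hq⟩ ⟨x | y, h⟩
    · exact orderOf_mk_r A q ⟨x, h⟩ ▸ hA ⟨x, h⟩
    · exact (orderOf_mk_sr h).symm ▸ hq (Option.ne_none_iff_exists.mpr ⟨_, h⟩)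

theorem exponent_none (A : AddSubgroup (ZMod n)) :
    Monoid.exponent (cosetSubgroup A none) = Nat.card A :=
  Nat.dvd_right_iff_eq.mp fun d => by simp [exponent_dvd]

theorem exponent_some (A : AddSubgroup (ZMod n)) (c : ZMod n ⧸ A) :
    Monoid.exponent (cosetSubgroup A (some c)) = Nat.lcm (Nat.card A) 2 :=
  Nat.dvd_right_iff_eq.mp fun d => by simp [exponent_dvd, Nat.lcm_dvd_iff]

/-- The elements of order `e` of `cosetSubgroup A q`, split into rotations and reflections. -/
def orderOfEquiv (A : AddSubgroup (ZMod n)) (q : Option (ZMod n ⧸ A)) (e : ℕ) :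
    {g : cosetSubgroup A q // orderOf g = e} ≃
      {x : A // addOrderOf x = e} ⊕ {y : ZMod n // some (y : ZMod n ⧸ A) = q ∧ e = 2} where
  toFun
    | ⟨⟨r x, hx⟩, h⟩ => .inl ⟨⟨x, hx⟩, (orderOf_mk_r A q ⟨x, hx⟩).symm.trans h⟩
    | ⟨⟨sr y, hy⟩, h⟩ => .inr ⟨y, hy, h.symm.trans (orderOf_mk_sr hy)⟩
  invFun
    | .inl x => ⟨⟨r x, x.1.2⟩, (orderOf_mk_r A q x).trans x.2⟩
    | .inr y => ⟨⟨sr y, y.2.1⟩, (orderOf_mk_sr y.2.1).trans y.2.2.symm⟩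
  left_inv := by rintro ⟨⟨x | y, _⟩, _⟩ <;> rfl
  right_inv := by rintro (x | y) <;> rfl

variable [NeZero n]

theorem card_orderOf_eq (A : AddSubgroup (ZMod n)) (q : Option (ZMod n ⧸ A)) (e : ℕ) :
    Nat.card {g : cosetSubgroup A q // orderOf g = e} = Nat.card {x : A // addOrderOf x = e} +
      Nat.card {y : ZMod n // some (y : ZMod n ⧸ A) = q ∧ e = 2} := by
  rw [Nat.card_congr (orderOfEquiv A q e), Nat.card_sum]

theorem phiG_none (A : AddSubgroup (ZMod n)) :
    phiG (cosetSubgroup A none) = Nat.totient (Nat.card A) := by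
  rw [phiG, card_orderOf_eq, exponent_none, card_addOrderOf_eq_natCard_eq_totient]
  simp

theorem phiG_some (A : AddSubgroup (ZMod n)) (c : ZMod n ⧸ A) :
    phiG (cosetSubgroup A (some c)) =
      (if 2 ∣ Nat.card A then Nat.totient (Nat.card A) else 0) +
        if Nat.card A ∣ 2 then Nat.card A else 0 := by
  rw [phiG, card_orderOf_eq, exponent_some]
  congr 1
  · split_ifs with h
    · rw [Nat.lcm_eq_left h, card_addOrderOf_eq_natCard_eq_totient]
    · have : IsEmpty {x : A // addOrderOf x = (Nat.card A).lcm 2} := ⟨fun ⟨x, hx⟩ =>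
        h ((Nat.dvd_lcm_right _ _).trans (hx ▸ addOrderOf_dvd_natCard x))⟩
      exact Nat.card_of_isEmpty
  · split_ifs with h
    · simpa [Nat.lcm_eq_right h] using card_subtype_mk_eq A c
    · have hne : (Nat.card A).lcm 2 ≠ 2 := fun h2 => h (h2 ▸ Nat.dvd_lcm_left _ _)
      simp [hne]

end cosetSubgroup

theorem card_quotient_zmod [NeZero n] (A : AddSubgroup (ZMod n)) :
    Nat.card (ZMod n ⧸ A) = n / Nat.card A := by
  refine (Nat.div_eq_of_eq_mul_left Nat.card_pos ?_).symm
  rw [← A.card_eq_card_quotient_mul_card_addSubgroup, Nat.card_zmod]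

theorem SG_dihedralGroup_eq_sum_divisors [NeZero n] :
    SG (DihedralGroup n) = ∑ d ∈ n.divisors, (d.totient +
      n / d * ((if 2 ∣ d then d.totient else 0) + if d ∣ 2 then d else 0)) := by
  classical
  have (A : AddSubgroup (ZMod n)) : Fintype (ZMod n ⧸ A) := Fintype.ofFinite _
  conv_rhs => rw [← Nat.card_zmod n, ← sum_addSubgroup_card_eq_sum_divisors, Nat.card_zmod]
  rw [SG, ← finsum_eq_of_bijective _ cosetSubgroup.bijective fun _ => rfl,
    finsum_eq_sum_of_fintype, Fintype.sum_sigma]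
  refine sum_congr rfl fun A _ => ?_
  rw [Fintype.sum_option, cosetSubgroup.phiG_none]
  simp only [cosetSubgroup.phiG_some, sum_const, card_univ, smul_eq_mul]
  rw [← Nat.card_eq_fintype_card, card_quotient_zmod]

theorem SG_dihedralGroup [NeZero n] :
    SG (DihedralGroup n) =
      n + n * n.gcd 2 + ∑ d ∈ n.divisors with 2 ∣ d, n / d * d.totient := by
  have divisors_two : {d ∈ n.divisors | d ∣ 2} = (n.gcd 2).divisors := by
    ext d
    simp [Nat.dvd_gcd_iff, NeZero.ne n]
  have card_divisors_gcd : #(n.gcd 2).divisors = n.gcd 2 := by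
    rcases (Nat.dvd_prime Nat.prime_two).mp (n.gcd_dvd_right 2) with h | h <;> rw [h] <;> rfl
  have sum_reflections : ∑ d ∈ n.divisors with d ∣ 2, n / d * d = n * n.gcd 2 := by
    rw [sum_congr rfl fun d hd => Nat.div_mul_cancel
      (Nat.dvd_of_mem_divisors (mem_filter.mp hd).1), sum_const, divisors_two, card_divisors_gcd,
      smul_eq_mul, mul_comm]
  rw [SG_dihedralGroup_eq_sum_divisors]
  simp only [mul_add, mul_ite, mul_zero, sum_add_distrib, ← sum_filter]
  rw [Nat.sum_totient, sum_reflections]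
  ring

end Dihedral

section Arithmetic

variable {p m : ℕ}

theorem sum_divisors_prime_pow_mul_filter_dvd (hp : p.Prime) (hpm : ¬p ∣ m) (k : ℕ)
    {M : Type*} [AddCommMonoid M] (f : ℕ → M) :
    ∑ d ∈ (p ^ k * m).divisors with p ∣ d, f d =
      ∑ j ∈ range k, ∑ e ∈ m.divisors, f (p ^ (j + 1) * e) := by
  have hcop : (p ^ k).Coprime m := Nat.Coprime.pow_left _ (hp.coprime_iff_not_dvd.mpr hpm)
  have hpe : ∀ e ∈ m.divisors, ¬p ∣ e := fun e he h => hpm (h.trans (Nat.dvd_of_mem_divisors he))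
  rw [sum_filter, Nat.divisors_mul, mul_def, sum_image hcop.mul_injOn_divisors, sum_product,
    Nat.sum_divisors_prime_pow hp, sum_range_succ']
  simp +contextual [hpe, pow_succ', mul_assoc]

theorem totient_div_self_prime_pow_succ_mul (hp : p.Prime) (hpm : ¬p ∣ m) (j : ℕ) :
    (Nat.totient (p ^ (j + 1) * m) : ℚ) / (p ^ (j + 1) * m : ℕ) =
      (1 - 1 / p) * (Nat.totient m / m) := by
  have hp0 : (p : ℚ) ≠ 0 := mod_cast hp.ne_zero
  rw [Nat.totient_mul (Nat.Coprime.pow_left _ (hp.coprime_iff_not_dvd.mpr hpm)),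
    Nat.totient_prime_pow_succ hp]
  push_cast [hp.one_le]
  rw [mul_div_mul_comm]
  congr 1
  field_simp
  ring

theorem sum_totient_div_self_filter_dvd (hp : p.Prime) (hpm : ¬p ∣ m) (k : ℕ) :
    ∑ d ∈ (p ^ k * m).divisors with p ∣ d, (Nat.totient d : ℚ) / d =
      k * (1 - 1 / p) * ∑ e ∈ m.divisors, (Nat.totient e : ℚ) / e := by
  have hterm : ∀ j ∈ range k, ∑ e ∈ m.divisors,
      (Nat.totient (p ^ (j + 1) * e) : ℚ) / (p ^ (j + 1) * e : ℕ) =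
        (1 - 1 / p) * ∑ e ∈ m.divisors, (Nat.totient e : ℚ) / e := fun j _ => by
    rw [mul_sum]
    exact sum_congr rfl fun e he => totient_div_self_prime_pow_succ_mul hp
      (fun h => hpm (h.trans (Nat.dvd_of_mem_divisors he))) j
  rw [sum_divisors_prime_pow_mul_filter_dvd hp hpm, sum_congr rfl hterm, sum_const, card_range,
    nsmul_eq_mul, mul_assoc]

end Arithmetic

theorem stmt_13 (n k m : ℕ) (hn2 : 2 ≤ n) (hk : 1 ≤ k) (hm : Odd m)
    (hn : n = 2 ^ k * m) :
    (SG (DihedralGroup n) : ℚ) =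
      3 * n + (k * n / 2) * ∑ d ∈ m.divisors, (Nat.totient d : ℚ) / d := by
  have : NeZero n := ⟨by omega⟩
  have two_dvd : 2 ∣ n := hn ▸ (dvd_pow_self 2 (by omega)).mul_right m
  have cast_sum_even : ((∑ d ∈ n.divisors with 2 ∣ d, n / d * d.totient : ℕ) : ℚ) =
      n * ∑ d ∈ n.divisors with 2 ∣ d, (d.totient : ℚ) / d := by
    rw [Nat.cast_sum, mul_sum]
    refine sum_congr rfl fun d hd => ?_
    rw [Nat.cast_mul, Nat.cast_div_charZero (Nat.dvd_of_mem_divisors (mem_filter.mp hd).1)]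
    ring
  have sum_even : ∑ d ∈ n.divisors with 2 ∣ d, (d.totient : ℚ) / d =
      k / 2 * ∑ d ∈ m.divisors, (Nat.totient d : ℚ) / d := by
    rw [hn, sum_totient_div_self_filter_dvd Nat.prime_two hm.not_two_dvd_nat]
    ring
  rw [SG_dihedralGroup, Nat.gcd_eq_right two_dvd, Nat.cast_add, cast_sum_even, sum_even]
  push_cast
  ring
end

section
/- Let $p$ be a prime, $r \geq 2$, and let $G$ be a finite abelian $p$-group of rank $r$ (i.e., $G$ is a direct product of $r$ nontrivial cyclic $p$-groups). Then $S(G) \geq |G| \cdot \frac{p^r + p^2 - p - 1}{p^2} + 1$, and in particular $S(G) > |G| + 1$. -/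
/-!
In a nontrivial finite abelian `p`-group `H` of exponent `p ^ (k + 1)`, the elements whose order is
not the exponent form the kernel of `x ↦ x ^ p ^ k`, a proper subgroup, so at least
`(p - 1) |H| / p` elements have order `exp H`. The index-`p` subgroups are the kernels of the
nontrivial homomorphisms to `ZMod p`, each arising from at most `p - 1` of them. These homomorphisms
form the dual of the `ZMod p`-vector space `G / pG`, whose dimension is at least the rank `r` of `G`
because lifts of a basis generate `G`. Hence there are at least `(p ^ r - 1) / (p - 1)` subgroups of
index `p`. The bound adds up the contributions of `G`, of its subgroups of index `p` and of the
trivial subgroup.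
-/

section IndexPrime

variable {G C : Type*} [Group G] [Group C]

theorem isCoatom_of_index_prime {H : Subgroup G} (hH : H.index.Prime) : IsCoatom H := by
  refine ⟨fun h ↦ hH.ne_one (Subgroup.index_eq_one.mpr h), fun K hK ↦ ?_⟩
  have : H.FiniteIndex := ⟨hH.ne_zero⟩
  have hdvd := Subgroup.index_dvd_of_le hK.le
  have hlt := Subgroup.index_strictAnti hK
  exact Subgroup.index_eq_one.mp (((Nat.dvd_prime hH).mp hdvd).resolve_right hlt.ne)

theorem ne_bot_of_index_prime (hG : ¬ IsCyclic G) {H : Subgroup G} (hH : H.index.Prime) :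
    H ≠ ⊥ := by
  rintro rfl
  rw [Subgroup.index_bot] at hH
  have : Fact (Nat.card G).Prime := ⟨hH⟩
  exact hG (isCyclic_of_prime_card rfl)

theorem index_ker_of_prime_card (hC : (Nat.card C).Prime) {f : G →* C} (hf : f ≠ 1) :
    f.ker.index = Nat.card C := by
  rw [Subgroup.index_ker]
  refine ((Nat.dvd_prime hC).mp f.range.card_subgroup_dvd_card).resolve_left fun h ↦ hf ?_
  exact MonoidHom.range_eq_bot_iff.mp (Subgroup.card_eq_one.mp h)

theorem ncard_setOf_ker_eq_le [Finite C] {H : Subgroup G} (hH : H.index.Prime) :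
    {f : G →* C | f.ker = H}.ncard ≤ Nat.card C - 1 := by
  have hcoatom := isCoatom_of_index_prime hH
  obtain ⟨g, hg⟩ : ∃ g, g ∉ H := by
    simpa [Subgroup.eq_top_iff'] using hcoatom.ne_top
  rw [← Set.ncard_singleton (1 : C), ← Set.ncard_compl]
  refine Set.ncard_le_ncard_of_injOn (fun f ↦ f g) ?_ ?_
  · rintro f rfl
    exact hg
  · intro f hf f' hf' hfg
    have hle : H ≤ f.eqLocus f' := fun x hx ↦ by
      have hx₁ : f x = 1 := MonoidHom.mem_ker.mp (hf.symm ▸ hx)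
      have hx₂ : f' x = 1 := MonoidHom.mem_ker.mp (hf'.symm ▸ hx)
      exact hx₁.trans hx₂.symm
    have htop : f.eqLocus f' = ⊤ :=
      hcoatom.2 _ (lt_of_le_of_ne hle fun h ↦ hg (h ▸ hfg))
    exact MonoidHom.eq_of_eqOn_top htop.ge

theorem card_monoidHom_le [Finite G] (hC : (Nat.card C).Prime) :
    Nat.card (G →* C) ≤
      (Nat.card C - 1) * {H : Subgroup G | H.index = Nat.card C}.ncard + 1 := by
  classical
  have : Finite C := Nat.finite_of_card_ne_zero hC.ne_zero
  have : Fintype (G →* C) := @Fintype.ofFinite _ (DFunLike.finite _)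
  have : Fintype (Subgroup G) := Fintype.ofFinite _
  have hker : (Finset.univ.erase (1 : G →* C)).card ≤
      (Nat.card C - 1) * {H : Subgroup G | H.index = Nat.card C}.toFinset.card := by
    refine Finset.card_le_mul_card_image_of_maps_to (f := MonoidHom.ker) ?_ _ ?_
    · intro f hf
      simpa using index_ker_of_prime_card hC (Finset.ne_of_mem_erase hf)
    · intro H hH
      rw [Set.mem_toFinset, Set.mem_ofPred_eq] at hH
      refine le_trans ?_ (ncard_setOf_ker_eq_le (C := C) (hH ▸ hC))
      rw [← Set.ncard_coe_finset]
      exact Set.ncard_le_ncard fun f hf ↦ (Finset.mem_filter.mp hf).2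
  rw [Finset.card_erase_of_mem (Finset.mem_univ _), Finset.card_univ,
    ← Nat.card_eq_fintype_card, ← Set.ncard_eq_toFinset_card'] at hker
  exact Nat.sub_le_iff_le_add.mp hker

end IndexPrime

instance moduleFiniteModN (A : Type*) [AddCommGroup A] [Finite A] (n : ℕ) :
    Module.Finite (ZMod n) (ModN A n) :=
  have : Finite (ModN A n) := Quotient.finite _
  Module.Finite.of_finite

theorem card_monoidHom_zmod (G : Type*) [CommGroup G] (p : ℕ) [Fact p.Prime]
    [Module.Finite (ZMod p) (ModN (Additive G) p)] :
    Nat.card (G →* Multiplicative (ZMod p)) =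
      p ^ Module.finrank (ZMod p) (ModN (Additive G) p) := by
  let lift : Module.Dual (ZMod p) (ModN (Additive G) p) ≃ (Additive G →+ ZMod p) :=
    ModN.liftEquiv'.trans (Equiv.subtypeUnivEquiv fun φ g ↦ by simp)
  rw [← Nat.card_congr (lift.trans AddMonoidHom.toMultiplicativeRight),
    Module.natCard_eq_pow_finrank (K := ZMod p), Subspace.dual_finrank_eq, Nat.card_zmod]

theorem sup_range_powMonoidHom_eq_top_of_map_mkQ_eq_top {G : Type*} [CommGroup G] {n : ℕ}
    {K : Subgroup G} (hK : K.toAddSubgroup.map (ModN.mkQ n) = ⊤) :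
    K ⊔ (powMonoidHom n : G →* G).range = ⊤ := by
  rw [eq_top_iff]
  intro x _
  obtain ⟨k, hk, hkx⟩ := hK ▸ AddSubgroup.mem_top (ModN.mkQ n (Additive.ofMul x))
  obtain ⟨y, hy⟩ := (Submodule.Quotient.eq' _).mp hkx
  refine Subgroup.mem_sup.mpr ⟨k.toMul, hk, _, ⟨y.toMul, rfl⟩, ?_⟩
  have hy' : y.toMul ^ n = k.toMul⁻¹ * x := by
    simpa using congrArg Additive.toMul hy
  rw [powMonoidHom_apply, hy', mul_inv_cancel_left]

section Rank

variable {G : Type*} [CommGroup G] [Finite G] {p : ℕ} [Fact p.Prime]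

theorem eq_top_of_sup_range_powMonoidHom_eq_top (hG : IsPGroup p G) {K : Subgroup G}
    (hK : K ⊔ (powMonoidHom p : G →* G).range = ⊤) : K = ⊤ := by
  have hsurj : Function.Surjective (powMonoidHom p : G ⧸ K →* G ⧸ K) := by
    intro x
    obtain ⟨x, rfl⟩ := QuotientGroup.mk_surjective x
    obtain ⟨k, hk, -, ⟨y, rfl⟩, rfl⟩ := Subgroup.mem_sup.mp (hK ▸ Subgroup.mem_top x)
    refine ⟨y, ?_⟩
    rw [QuotientGroup.mk_mul, (QuotientGroup.eq_one_iff k).mpr hk, one_mul]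
    rfl
  have hinj : Function.Injective (powMonoidHom p : G ⧸ K →* G ⧸ K) :=
    Finite.injective_iff_surjective.mpr hsurj
  have hcard : Nat.card (G ⧸ K) = 1 := by
    refine (hG.to_quotient K).card_eq_or_dvd.resolve_right fun hdvd ↦ ?_
    obtain ⟨x, hx⟩ := exists_prime_orderOf_dvd_card' p hdvd
    have hx_one : x = 1 := hinj (by simp [← hx, pow_orderOf_eq_one])
    rw [hx_one, orderOf_one] at hx
    exact (Fact.out : p.Prime).ne_one hx.symm
  exact Subgroup.index_eq_one.mp hcard

theorem rank_le_finrank_modN (hG : IsPGroup p G) :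
    Group.rank G ≤ Module.finrank (ZMod p) (ModN (Additive G) p) := by
  classical
  have hq : Function.Surjective (ModN.mkQ (G := Additive G) p) := Submodule.mkQ_surjective _
  let b := Module.finBasis (ZMod p) (ModN (Additive G) p)
  choose g hg using fun i ↦ hq (b i)
  let S : Finset G := Finset.univ.image fun i ↦ (g i).toMul
  let K := Subgroup.closure (S : Set G)
  have hgK (i) : (g i).toMul ∈ K :=
    Subgroup.subset_closure (Finset.mem_image_of_mem _ (Finset.mem_univ i))
  have himage : K.toAddSubgroup.map (ModN.mkQ p) = ⊤ := by
    let W := AddSubgroup.toZModSubmodule p (K.toAddSubgroup.map (ModN.mkQ p))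
    have hW : W = ⊤ := by
      rw [eq_top_iff, ← b.span_eq, Submodule.span_le]
      rintro - ⟨i, rfl⟩
      exact ⟨g i, hgK i, hg i⟩
    exact congrArg Submodule.toAddSubgroup hW
  have hK : K = ⊤ := eq_top_of_sup_range_powMonoidHom_eq_top hG
    (sup_range_powMonoidHom_eq_top_of_map_mkQ_eq_top himage)
  calc Group.rank G ≤ S.card := Group.rank_le hK
    _ ≤ (Finset.univ : Finset (Fin _)).card := Finset.card_image_le
    _ = Module.finrank (ZMod p) (ModN (Additive G) p) := Finset.card_fin _

theorem pow_rank_le_ncard_index_eq (hG : IsPGroup p G) :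
    p ^ Group.rank G ≤ (p - 1) * {H : Subgroup G | H.index = p}.ncard + 1 := by
  have hp : p.Prime := Fact.out
  have hcard : Nat.card (Multiplicative (ZMod p)) = p := Nat.card_zmod p
  calc p ^ Group.rank G ≤ p ^ Module.finrank (ZMod p) (ModN (Additive G) p) :=
        Nat.pow_le_pow_right hp.pos (rank_le_finrank_modN hG)
    _ = Nat.card (G →* Multiplicative (ZMod p)) := (card_monoidHom_zmod G p).symm
    _ ≤ (p - 1) * {H : Subgroup G | H.index = p}.ncard + 1 := by
        simpa only [hcard] using
          card_monoidHom_le (G := G) (C := Multiplicative (ZMod p)) (by rwa [hcard])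

end Rank

theorem rank_le_one_of_isCyclic (G : Type*) [Group G] [IsCyclic G] [Group.FG G] :
    Group.rank G ≤ 1 := by
  obtain ⟨g, hg⟩ := IsCyclic.exists_generator (α := G)
  have hclosure : Subgroup.closure (({g} : Finset G) : Set G) = ⊤ := by
    rw [Finset.coe_singleton, ← Subgroup.zpowers_eq_closure]
    exact (Subgroup.eq_top_iff' _).mpr hg
  exact Group.rank_le hclosure

section PGroup

variable {G : Type*} [Group G] [Finite G] {p : ℕ} [Fact p.Prime]

theorem prime_mul_card_le_card (hG : IsPGroup p G) {K : Subgroup G} (hK : K ≠ ⊤) :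
    p * Nat.card K ≤ Nat.card G := by
  obtain ⟨n, hn⟩ := hG.index K
  have hn0 : n ≠ 0 := by
    rintro rfl
    exact hK (Subgroup.index_eq_one.mp hn)
  calc p * Nat.card K ≤ p ^ n * Nat.card K := by gcongr; exact Nat.le_self_pow hn0 p
    _ = Nat.card G := by rw [← hn, K.index_mul_card]

theorem pow_exponent_div_eq_one_iff (hG : IsPGroup p G) [Nontrivial G] (a : G) :
    a ^ (Monoid.exponent G / p) = 1 ↔ orderOf a ≠ Monoid.exponent G := by
  have hp : p.Prime := Fact.out
  obtain ⟨e, he⟩ := isPGroup_iff_exponent_eq_pow.mp hG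
  obtain ⟨k, rfl⟩ : ∃ k, e = k + 1 := by
    refine Nat.exists_eq_succ_of_ne_zero ?_
    rintro rfl
    exact not_subsingleton G (Monoid.exp_eq_one_iff.mp he)
  obtain ⟨m, hm, hord⟩ := (Nat.dvd_prime_pow hp).mp (he ▸ Monoid.order_dvd_exponent a)
  rw [he, Nat.pow_succ, Nat.mul_div_cancel _ hp.pos, ← orderOf_dvd_iff_pow_eq_one, hord,
    Nat.pow_dvd_pow_iff_le_right hp.one_lt, ← Nat.pow_succ, Ne, Nat.pow_right_inj hp.two_le]
  lia

end PGroup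

theorem phiG_of_subsingleton (G : Type*) [Group G] [Subsingleton G] : phiG G = 1 := by
  have hord (a : G) : orderOf a = Monoid.exponent G := by
    rw [Subsingleton.elim a 1, orderOf_one, Monoid.exp_eq_one_iff.mpr ‹_›]
  simp [phiG, hord]

theorem phiG_add_one_add_sum_le_SG {G : Type*} [Group G] [Finite G] [Nontrivial G]
    {F : Finset (Subgroup G)} (hbot : ⊥ ∉ F) (htop : ⊤ ∉ F) :
    phiG G + 1 + ∑ H ∈ F, phiG H ≤ SG G := by
  classical
  have : Fintype (Subgroup G) := Fintype.ofFinite _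
  have hbot' : ⊥ ∉ insert ⊤ F := by simp [hbot, bot_ne_top]
  calc phiG G + 1 + ∑ H ∈ F, phiG H
      = ∑ H ∈ insert ⊥ (insert ⊤ F), phiG H := by
        rw [Finset.sum_insert hbot', Finset.sum_insert htop,
          phiG_of_subsingleton (⊥ : Subgroup G), phiG_congr Subgroup.topEquiv]
        ring
    _ ≤ ∑ H : Subgroup G, phiG H := Finset.sum_le_sum_of_subset (Finset.subset_univ _)
    _ = SG G := (finsum_eq_sum_of_fintype _).symm

section AbelianPGroup

variable {G : Type*} [CommGroup G] [Finite G] {p : ℕ} [Fact p.Prime]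

theorem phiG_add_card_ker (hG : IsPGroup p G) [Nontrivial G] :
    phiG G + Nat.card (powMonoidHom (Monoid.exponent G / p) : G →* G).ker = Nat.card G := by
  have hker : ((powMonoidHom (Monoid.exponent G / p) : G →* G).ker : Set G) =
      {a | orderOf a = Monoid.exponent G}ᶜ :=
    Set.ext (pow_exponent_div_eq_one_iff hG)
  rw [← Set.ncard_add_ncard_compl {a : G | orderOf a = Monoid.exponent G}, ← hker]
  rfl

theorem sub_one_mul_card_le_mul_phiG (hG : IsPGroup p G) [Nontrivial G] :
    (p - 1) * Nat.card G ≤ p * phiG G := by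
  obtain ⟨x, hx⟩ := Monoid.exists_orderOf_eq_exponent (Monoid.ExponentExists.of_finite (G := G))
  have hker : (powMonoidHom (Monoid.exponent G / p) : G →* G).ker ≠ ⊤ := fun h ↦
    (pow_exponent_div_eq_one_iff hG x).mp (MonoidHom.mem_ker.mp (h ▸ Subgroup.mem_top x)) hx
  have hcard := prime_mul_card_le_card hG hker
  rw [Nat.sub_one_mul, Nat.sub_le_iff_le_add]
  calc p * Nat.card G
      = p * phiG G + p * Nat.card (powMonoidHom (Monoid.exponent G / p) : G →* G).ker := by
        rw [← mul_add, phiG_add_card_ker hG]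
    _ ≤ p * phiG G + Nat.card G := by gcongr

theorem sub_one_mul_card_le_sq_mul_phiG (hG : IsPGroup p G) {H : Subgroup G} (hH : H.index = p)
    (hbot : H ≠ ⊥) : (p - 1) * Nat.card G ≤ p ^ 2 * phiG H := by
  have : Nontrivial H := (Subgroup.nontrivial_iff_ne_bot H).mpr hbot
  calc (p - 1) * Nat.card G = p * ((p - 1) * Nat.card H) := by
        rw [← H.index_mul_card, hH, mul_left_comm]
    _ ≤ p * (p * phiG H) :=
        Nat.mul_le_mul_left p (sub_one_mul_card_le_mul_phiG (hG.to_subgroup H))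
    _ = p ^ 2 * phiG H := by ring

theorem card_mul_add_sq_le_sq_mul_SG (hG : IsPGroup p G) (hcyc : ¬ IsCyclic G) :
    Nat.card G * (p * (p - 1) + (p ^ Group.rank G - 1)) + p ^ 2 ≤ p ^ 2 * SG G := by
  have hp : p.Prime := Fact.out
  have : Nontrivial G := not_subsingleton_iff_nontrivial.mp fun _ ↦ hcyc inferInstance
  let F := (Set.toFinite {H : Subgroup G | H.index = p}).toFinset
  have hindex {H : Subgroup G} (hH : H ∈ F) : H.index = p := by simpa [F] using hH
  have hne_bot {H : Subgroup G} (hH : H ∈ F) : H ≠ ⊥ :=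
    ne_bot_of_index_prime hcyc (hindex hH ▸ hp)
  have htop : ⊤ ∉ F := fun h ↦ hp.ne_one (hindex h ▸ Subgroup.index_top)
  have hcount : p ^ Group.rank G - 1 ≤ (p - 1) * F.card := by
    rw [Nat.sub_le_iff_le_add, ← Set.ncard_eq_toFinset_card]
    exact pow_rank_le_ncard_index_eq hG
  have hmaximal : Nat.card G * (p ^ Group.rank G - 1) ≤ p ^ 2 * ∑ H ∈ F, phiG H :=
    calc Nat.card G * (p ^ Group.rank G - 1)
        ≤ Nat.card G * ((p - 1) * F.card) := by gcongr
      _ = ∑ H ∈ F, (p - 1) * Nat.card G := by rw [Finset.sum_const, smul_eq_mul]; ring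
      _ ≤ ∑ H ∈ F, p ^ 2 * phiG H := Finset.sum_le_sum fun H hH ↦
          sub_one_mul_card_le_sq_mul_phiG hG (hindex hH) (hne_bot hH)
      _ = p ^ 2 * ∑ H ∈ F, phiG H := (Finset.mul_sum _ _ _).symm
  calc Nat.card G * (p * (p - 1) + (p ^ Group.rank G - 1)) + p ^ 2
      = p * ((p - 1) * Nat.card G) + p ^ 2 + Nat.card G * (p ^ Group.rank G - 1) := by ring
    _ ≤ p * (p * phiG G) + p ^ 2 + p ^ 2 * ∑ H ∈ F, phiG H := by
        grw [sub_one_mul_card_le_mul_phiG hG, hmaximal]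
    _ = p ^ 2 * (phiG G + 1 + ∑ H ∈ F, phiG H) := by ring
    _ ≤ p ^ 2 * SG G := by
        grw [phiG_add_one_add_sum_le_SG (fun h ↦ hne_bot h rfl) htop]

end AbelianPGroup

theorem stmt_18 (p : ℕ) (hp : p.Prime) (G : Type*) [CommGroup G] [Fintype G]
    (hpg : IsPGroup p G) (r : ℕ) (hr : Group.rank G = r) (hr2 : 2 ≤ r) :
    (SG G : ℚ) ≥ (Nat.card G : ℚ) * (((p : ℚ) ^ r + p ^ 2 - p - 1) / p ^ 2) + 1 ∧
      SG G > Nat.card G + 1 := by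
  have : Fact p.Prime := ⟨hp⟩
  have hcyc : ¬ IsCyclic G := fun _ ↦ by
    have := rank_le_one_of_isCyclic G
    lia
  have hp2 : (2 : ℚ) ≤ p := mod_cast hp.two_le
  have hpp : (0 : ℚ) < (p : ℚ) ^ 2 := by positivity
  have hbound : (SG G : ℚ) ≥
      (Nat.card G : ℚ) * (((p : ℚ) ^ r + p ^ 2 - p - 1) / p ^ 2) + 1 := by
    have h := Nat.cast_le (α := ℚ).mpr (card_mul_add_sq_le_sq_mul_SG hpg hcyc)
    push_cast [hr, hp.one_le, Nat.one_le_pow r p hp.pos] at h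
    rw [ge_iff_le, ← mul_div_assoc, ← le_sub_iff_add_le, div_le_iff₀ hpp]
    linarith
  have hfactor : 1 < ((p : ℚ) ^ r + p ^ 2 - p - 1) / p ^ 2 := by
    have hpow : (p : ℚ) ^ 2 ≤ p ^ r := pow_le_pow_right₀ (by linarith) hr2
    rw [lt_div_iff₀ hpp]
    nlinarith
  have hcard : (0 : ℚ) < Nat.card G := mod_cast Nat.card_pos
  have hstrict : (Nat.card G : ℚ) + 1 < SG G :=
    lt_of_lt_of_le (by gcongr; exact lt_mul_of_one_lt_right hcard hfactor) hbound
  exact ⟨hbound, mod_cast hstrict⟩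
end
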